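/- Let 𝒟 = {DF(w) : w ∈ Max} with the Hausdorff metric. There is a dense G_δ subset 𝒢 of 𝒟 such that every Λ ∈ 𝒢 has the following properties: the set of extreme points of Λ has a unique accumulation point v; v is an extreme point of Λ; v is totally irrational, i.e. there is no nonzero n ∈ ℤ³ with n·v = 0; and Λ is smooth at v, i.e. there is exactly one line L in the plane {x ∈ ℝ³ : x₀+x₁+x₂ = 1} with v ∈ L such that Λ is contained in one of the two closed half-planes of that plane bounded by L. -/

import Mathlib

open Filter Topology MeasureTheory

/-- The sequence space `Σ⁺ = {0,1,2}^ℕ` (with the product topology). -/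
abbrev Seq3 := ℕ → Fin 3

/-- The shift map `σ`. -/
def shift (s : Seq3) : Seq3 := fun n => s (n + 1)

/-- The observable `κ(s) = e_{s₀}`. -/
noncomputable def kappa (s : Seq3) : Fin 3 → ℝ := fun i => if i = s 0 then 1 else 0

/-- The cocycle `κ_σ(s,r) = Σ_{i<r} κ(σⁱ s)`. -/
noncomputable def birk (s : Seq3) (r : ℕ) : Fin 3 → ℝ :=
  ∑ i ∈ Finset.range r, kappa (shift^[i] s)

/-- The Birkhoff digit frequency of `s` exists and equals `v`. -/
def hasFreq (s : Seq3) (v : Fin 3 → ℝ) : Prop :=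
  Tendsto (fun r : ℕ => (r : ℝ)⁻¹ • birk s r) atTop (nhds v)

/-- The lexicographic order on `Σ⁺`. -/
def lexLe (s t : Seq3) : Prop :=
  s = t ∨ ∃ n, (∀ i, i < n → s i = t i) ∧ s n < t n

/-- The set `Max` of maximal sequences. -/
def MaxSet : Set Seq3 := {w | w 0 = 2 ∧ ∀ r : ℕ, lexLe (shift^[r] w) w}

/-- The symbolic β-shift `B(w)`. -/
def BetaShift (w : Seq3) : Set Seq3 := {s | ∀ r : ℕ, lexLe (shift^[r] s) w}

/-- The digit frequency set `DF(w)`. -/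
def DF (w : Seq3) : Set (Fin 3 → ℝ) := {v | ∃ s ∈ BetaShift w, hasFreq s v}

/-- The Misiurewicz–Ziemian digit frequency set `DF_MZ(X)` of a subset `X ⊆ Σ⁺`. -/
def DFMZ (X : Set Seq3) : Set (Fin 3 → ℝ) :=
  {v | ∃ (s : ℕ → Seq3) (r : ℕ → ℕ), (∀ i, s i ∈ X) ∧ Tendsto r atTop atTop ∧
    Tendsto (fun i => (r i : ℝ)⁻¹ • birk (s i) (r i)) atTop (nhds v)}

/-- The standard 2-simplex `Δ ⊆ ℝ³`. -/
def Delta : Set (Fin 3 → ℝ) := {α | (∀ i, 0 ≤ α i) ∧ α 0 + α 1 + α 2 = 1}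

/-- `Δ' = {α ∈ Δ : α₂ > 0}`. -/
def Delta' : Set (Fin 3 → ℝ) := {α | α ∈ Delta ∧ 0 < α 2}

/-- `I` is the infimax sequence of `α`: the infimum, in the lexicographic order, of the
(nonempty) set of maximal sequences with digit frequency `α`; it belongs to `Max`. -/
def IsInfimax (α : Fin 3 → ℝ) (I : Seq3) : Prop :=
  {w | w ∈ MaxSet ∧ hasFreq w α}.Nonempty ∧ I ∈ MaxSet ∧
    (∀ w, w ∈ MaxSet ∧ hasFreq w α → lexLe I w) ∧
    (∀ b : Seq3, (∀ w, w ∈ MaxSet ∧ hasFreq w α → lexLe b w) → lexLe b I)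

/-- The closure of the forward `σ`-orbit of `s` (e.g. `C_α` is `orbitClosure I(α)`). -/
def orbitClosure (s : Seq3) : Set Seq3 := closure {t | ∃ r : ℕ, shift^[r] s = t}

/-- A vector in `ℝ³` is rational if all its coordinates are. -/
def IsRat (v : Fin 3 → ℝ) : Prop := ∀ i, ∃ q : ℚ, v i = (q : ℝ)

/-- A minimal set of a continuous map: a nonempty compact invariant set in which every
point has dense forward orbit. -/
def IsMinimalSet {X : Type*} [TopologicalSpace X] (f : X → X) (C : Set X) : Prop :=
  C.Nonempty ∧ IsCompact C ∧ Set.MapsTo f C C ∧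
    ∀ x ∈ C, C ⊆ closure {y | ∃ n : ℕ, f^[n] x = y}

/-- `L` is a supporting line of `S` at `v` within the plane `{x : x₀+x₁+x₂ = 1}`: `L` is a
line through `v` with direction parallel to the plane, and there is a linear functional,
constant on `L` but not constant on the plane, with respect to which `S` lies in the
closed half-plane bounded by `L`. -/
def IsSuppLine (S : Set (Fin 3 → ℝ)) (v : Fin 3 → ℝ) (L : Set (Fin 3 → ℝ)) : Prop :=
  ∃ d : Fin 3 → ℝ, d ≠ 0 ∧ d 0 + d 1 + d 2 = 0 ∧
    L = {x | ∃ t : ℝ, x = v + t • d} ∧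
    ∃ f : (Fin 3 → ℝ) →ₗ[ℝ] ℝ, f d = 0 ∧
      (∃ x : Fin 3 → ℝ, x 0 + x 1 + x 2 = 1 ∧ f x ≠ f v) ∧
      ∀ x ∈ S, f x ≤ f v

/-- `v` is totally irrational: no nonzero integer vector is orthogonal to it. -/
def TotallyIrrational (v : Fin 3 → ℝ) : Prop :=
  ¬ ∃ m : Fin 3 → ℤ, m ≠ 0 ∧ (∑ i, (m i : ℝ) * v i) = 0

/-!
For `n : ℕ` let `θₙ` be the substitution on `{0, 1, 2}` underlying `substSeq n`. A finite code
`u = [n₁, …, nₖ]` yields a lexicographic interval of maximal sequences, bounded by the images of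
`2000…` and `222…` under `θ_{n₁} ∘ ⋯ ∘ θ_{nₖ}`, and a triangle in the plane `x₀ + x₁ + x₂ = 1`,
whose corners are the directions of the images of the standard basis vectors under the
corresponding product of matrices. Since `w ↦ DF w` is monotone and continuous, a property of
finite codes that can always be achieved by prolonging the code defines a dense open set of digit
frequency sets.

An infinite code has nested triangles. If they shrink to a point `v`, then the digit frequency set
of a sequence with this code is the convex hull of `v` and of the first corners of the triangles,
which converge to `v`. The third barycentric coordinate of each triangle separates the earlier
corners from `v`, so that `v` is extreme as soon as it is totally irrational. If moreover two
consecutive corners are seen from `v` in directions that are almost opposite, arbitrarily closely,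
then `v` is neither isolated among the extreme points nor the apex of an angle less than `π`. Each
of these conditions is a countable conjunction of achievable ones, and Baire's theorem concludes.
-/

/-! ### Words and their digit counts -/

/-- The standard basis vector `e_a` of `ℝ³`. -/
noncomputable abbrev stdVec (a : Fin 3) : Fin 3 → ℝ := Pi.single a 1

/-- The sum of the coordinates; the plane containing `Δ` is its level set `1`. -/
noncomputable def coordSum : (Fin 3 → ℝ) →ₗ[ℝ] ℝ := ∑ i, LinearMap.proj i

lemma coordSum_apply (x : Fin 3 → ℝ) : coordSum x = x 0 + x 1 + x 2 := by
  simp [coordSum, Fin.sum_univ_three]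

lemma coordSum_stdVec (a : Fin 3) : coordSum (stdVec a) = 1 := by
  simp [coordSum]

lemma stdVec_nonneg (a : Fin 3) : 0 ≤ stdVec a := Pi.single_nonneg.2 zero_le_one

/-- The Parikh vector of a word: the number of occurrences of each digit. -/
def parikh (l : List (Fin 3)) : Fin 3 → ℝ := fun i => l.count i

@[simp] lemma parikh_nil : parikh [] = 0 := by ext; simp [parikh]

@[simp] lemma parikh_cons (a : Fin 3) (l : List (Fin 3)) :
    parikh (a :: l) = stdVec a + parikh l := by
  ext i
  by_cases h : i = a <;> simp [parikh, h, Ne.symm, add_comm]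

@[simp] lemma parikh_append (l l' : List (Fin 3)) : parikh (l ++ l') = parikh l + parikh l' := by
  ext; simp [parikh]

@[simp] lemma parikh_replicate (n : ℕ) (a : Fin 3) :
    parikh (List.replicate n a) = (n : ℝ) • stdVec a := by
  induction n with
  | zero => simp
  | succ n ih =>
    rw [List.replicate_succ, parikh_cons, ih, Nat.cast_succ, add_smul, one_smul, add_comm]

lemma parikh_flatten_replicate (k : ℕ) (l : List (Fin 3)) :
    parikh (List.replicate k l).flatten = (k : ℝ) • parikh l := by
  induction k with
  | zero => simp
  | succ k ih =>
    rw [List.replicate_succ, List.flatten_cons, parikh_append, ih, Nat.cast_succ, add_smul,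
      one_smul, add_comm]

lemma coordSum_parikh (l : List (Fin 3)) : coordSum (parikh l) = l.length := by
  induction l with
  | nil => simp
  | cons a l ih => simp [ih, coordSum_stdVec, add_comm]

lemma norm_parikh_le (l : List (Fin 3)) : ‖parikh l‖ ≤ l.length :=
  (pi_norm_le_iff_of_nonneg (Nat.cast_nonneg _)).2 fun i => by
    simpa [parikh] using List.count_le_length

/-- The digit frequency vector of a word (which is `0` for the empty word). -/
noncomputable def wordFreq (l : List (Fin 3)) : Fin 3 → ℝ := (l.length : ℝ)⁻¹ • parikh l

lemma length_cast_pos {l : List (Fin 3)} (hl : l ≠ []) : (0 : ℝ) < l.length :=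
  Nat.cast_pos.2 (List.length_pos_iff.2 hl)

lemma parikh_eq_length_smul_wordFreq (l : List (Fin 3)) :
    parikh l = (l.length : ℝ) • wordFreq l := by
  rcases eq_or_ne l [] with rfl | hl
  · simp
  · rw [wordFreq, smul_inv_smul₀ (length_cast_pos hl).ne']

lemma coordSum_wordFreq {l : List (Fin 3)} (hl : l ≠ []) : coordSum (wordFreq l) = 1 := by
  rw [wordFreq, map_smul, coordSum_parikh, smul_eq_mul, inv_mul_cancel₀ (length_cast_pos hl).ne']

lemma norm_wordFreq_le_one (l : List (Fin 3)) : ‖wordFreq l‖ ≤ 1 := by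
  rw [wordFreq, norm_smul, Real.norm_of_nonneg (by positivity)]
  exact (mul_le_mul_of_nonneg_left (norm_parikh_le l) (by positivity)).trans inv_mul_le_one

/-! ### Prefixes and the lexicographic order -/

lemma shift_iterate_apply (r : ℕ) (s : Seq3) (i : ℕ) : (shift^[r] s) i = s (r + i) := by
  induction r generalizing s with
  | zero => simp
  | succ r ih => rw [Function.iterate_succ_apply, ih, shift, Nat.add_right_comm]

/-- The prefix of length `k` of a sequence. -/
def prefixWord : ℕ → Seq3 → List (Fin 3)
  | 0, _ => []
  | k + 1, s => s 0 :: prefixWord k (shift s)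

@[simp] lemma length_prefixWord (k : ℕ) (s : Seq3) : (prefixWord k s).length = k := by
  induction k generalizing s with
  | zero => rfl
  | succ k ih => simp [prefixWord, ih]

lemma prefixWord_add (a b : ℕ) (s : Seq3) :
    prefixWord (a + b) s = prefixWord a s ++ prefixWord b (shift^[a] s) := by
  induction a generalizing s with
  | zero => simp [prefixWord]
  | succ a ih =>
    rw [Nat.add_right_comm]
    simp only [prefixWord, List.cons_append, Function.iterate_succ_apply, ih]

lemma prefixWord_getElem? (k : ℕ) (s : Seq3) (i : ℕ) :
    (prefixWord k s)[i]? = if i < k then some (s i) else none := by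
  induction k generalizing s i with
  | zero => simp [prefixWord]
  | succ k ih => cases i <;> simp [prefixWord, ih, shift]

lemma birk_eq_parikh (s : Seq3) (r : ℕ) : birk s r = parikh (prefixWord r s) := by
  induction r generalizing s with
  | zero => simp [birk, prefixWord]
  | succ r ih =>
    have hkappa : kappa s = stdVec (s 0) := by ext; simp [kappa, Pi.single_apply]
    have hbirk : birk s (r + 1) = kappa s + birk (shift s) r := by
      rw [birk, Finset.sum_range_succ', add_comm]
      rfl
    rw [hbirk, ih, hkappa, prefixWord, parikh_cons]

lemma lexLe_iff_toLex_le {s t : Seq3} : lexLe s t ↔ toLex s ≤ toLex t := by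
  rw [le_iff_eq_or_lt]
  exact Iff.or toLex_inj.symm Iff.rfl

lemma toLex_lt_of_apply_zero_lt {s t : Seq3} (h : s 0 < t 0) : toLex s < toLex t :=
  ⟨0, by simp, h⟩

lemma lexLe_refl (s : Seq3) : lexLe s s := Or.inl rfl

lemma lexLe_trans {s t u : Seq3} (hst : lexLe s t) (htu : lexLe t u) : lexLe s u := by
  rw [lexLe_iff_toLex_le] at *
  exact hst.trans htu

lemma lexLe_total (s t : Seq3) : lexLe s t ∨ lexLe t s := by
  simp only [lexLe_iff_toLex_le]
  exact le_total _ _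

lemma lexLe_iff_forall_agree (s t : Seq3) :
    lexLe s t ↔ ∀ n, (∀ i < n, s i = t i) → s n ≤ t n := by
  rw [lexLe_iff_toLex_le, ← not_lt]
  constructor
  · intro h n hn
    by_contra! hlt
    exact h ⟨n, fun i hi => (hn i hi).symm, hlt⟩
  · rintro h ⟨n, hn, hlt⟩
    exact (h n fun i hi => (hn i hi).symm).not_gt hlt

/-! ### Admissible words -/

/-- The word `l` is lexicographically smaller than the prefix of `w` of the same length. -/
def WordLT : List (Fin 3) → Seq3 → Prop
  | [], _ => False
  | a :: l, w => a < w 0 ∨ a = w 0 ∧ WordLT l (shift w)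

/-- The word `l` is lexicographically at most the prefix of `w` of the same length. -/
def WordLE : List (Fin 3) → Seq3 → Prop
  | [], _ => True
  | a :: l, w => a < w 0 ∨ a = w 0 ∧ WordLE l (shift w)

/-- Every nonempty suffix of the word is smaller than the prefix of `w` of the same length.
Such words can be concatenated freely without leaving `B(w)`. -/
def StrictAdmissible (w : Seq3) : List (Fin 3) → Prop
  | [] => True
  | a :: l => WordLT (a :: l) w ∧ StrictAdmissible w l

/-- Every suffix of the word is at most the prefix of `w` of the same length, as holds for the
factors of the sequences in `B(w)`. -/
def Admissible (w : Seq3) : List (Fin 3) → Prop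
  | [] => True
  | a :: l => WordLE (a :: l) w ∧ Admissible w l

section Admissible

variable {l l' : List (Fin 3)} {w w' s : Seq3}

lemma WordLT.append (h : WordLT l w) (l' : List (Fin 3)) : WordLT (l ++ l') w := by
  induction l generalizing w with
  | nil => exact h.elim
  | cons a l ih => exact h.imp_right (And.imp_right ih)

lemma WordLT.wordLE (h : WordLT l w) : WordLE l w := by
  induction l generalizing w with
  | nil => trivial
  | cons a l ih => exact h.imp_right (And.imp_right ih)

lemma WordLE.of_append (h : WordLE (l ++ l') w) : WordLE l w := by
  induction l generalizing w with
  | nil => trivial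
  | cons a l ih => exact h.imp_right (And.imp_right ih)

lemma WordLE.congr (hw : Set.EqOn w w' (Set.Iio l.length)) (h : WordLE l w) : WordLE l w' := by
  induction l generalizing w w' with
  | nil => trivial
  | cons a l ih =>
    have h₀ : w 0 = w' 0 := hw (Nat.succ_pos _)
    rcases h with h | ⟨h, hl⟩
    · exact Or.inl (h₀ ▸ h)
    · exact Or.inr ⟨h₀ ▸ h, ih (fun i hi => hw (Nat.succ_lt_succ hi)) hl⟩

lemma wordLE_prefixWord_iff (k : ℕ) (s t : Seq3) :
    WordLE (prefixWord k s) t ↔ ∀ n < k, (∀ i < n, s i = t i) → s n ≤ t n := by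
  induction k generalizing s t with
  | zero => simp [prefixWord, WordLE]
  | succ k ih =>
    simp only [prefixWord, WordLE, ih, shift]
    constructor
    · rintro (h | ⟨h, hle⟩) (_ | n) hn hi
      · exact h.le
      · exact absurd (hi 0 n.succ_pos) h.ne
      · exact h.le
      · exact hle n (by omega) fun i hin => hi (i + 1) (by omega)
    · intro h
      refine (h 0 k.succ_pos (by simp)).lt_or_eq.imp_right fun h₀ => ⟨h₀, fun n hn hi => ?_⟩
      refine h (n + 1) (by omega) fun i hin => ?_
      cases i with
      | zero => exact h₀
      | succ i => exact hi i (by omega)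

lemma lexLe_iff_forall_wordLE (s t : Seq3) : lexLe s t ↔ ∀ k, WordLE (prefixWord k s) t := by
  simp only [lexLe_iff_forall_agree, wordLE_prefixWord_iff]
  exact ⟨fun h k n _ => h n, fun h n => h (n + 1) n n.lt_succ_self⟩

lemma StrictAdmissible.append (h : StrictAdmissible w l) (h' : StrictAdmissible w l') :
    StrictAdmissible w (l ++ l') := by
  induction l with
  | nil => exact h'
  | cons a l ih => exact ⟨h.1.append l', ih h.2⟩

lemma StrictAdmissible.flatten {L : List (List (Fin 3))} (h : ∀ l ∈ L, StrictAdmissible w l) :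
    StrictAdmissible w L.flatten := by
  induction L with
  | nil => trivial
  | cons l L ih => exact (h l (by simp)).append (ih fun l' hl' => h l' (by simp [hl']))

lemma StrictAdmissible.right_of_append (h : StrictAdmissible w (l ++ l')) :
    StrictAdmissible w l' := by
  induction l with
  | nil => exact h
  | cons a l ih => exact ih h.2

lemma StrictAdmissible.wordLT (h : StrictAdmissible w l) (hl : l ≠ []) : WordLT l w := by
  cases l with
  | nil => exact (hl rfl).elim
  | cons a l => exact h.1

lemma StrictAdmissible.admissible (h : StrictAdmissible w l) : Admissible w l := by
  induction l with
  | nil => trivial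
  | cons a l ih => exact ⟨h.1.wordLE, ih h.2⟩

lemma Admissible.left_of_append (h : Admissible w (l ++ l')) : Admissible w l := by
  induction l with
  | nil => trivial
  | cons a l ih => exact ⟨WordLE.of_append h.1, ih h.2⟩

lemma Admissible.right_of_append (h : Admissible w (l ++ l')) : Admissible w l' := by
  induction l with
  | nil => exact h
  | cons a l ih => exact ih h.2

lemma Admissible.wordLE (h : Admissible w l) : WordLE l w := by
  cases l with
  | nil => trivial
  | cons a l => exact h.1

lemma Admissible.congr (hw : Set.EqOn w w' (Set.Iio l.length)) (h : Admissible w l) :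
    Admissible w' l := by
  induction l with
  | nil => trivial
  | cons a l ih => exact ⟨h.1.congr hw, ih (fun i hi => hw (Nat.lt_succ_of_lt hi)) h.2⟩

lemma admissible_prefixWord (hs : s ∈ BetaShift w) (k r : ℕ) :
    Admissible w (prefixWord k (shift^[r] s)) := by
  induction k generalizing r with
  | zero => trivial
  | succ k ih =>
    refine ⟨(lexLe_iff_forall_wordLE _ _).1 (hs r) (k + 1), ?_⟩
    have ih := ih (r + 1)
    rwa [Function.iterate_succ_apply'] at ih

lemma mem_betaShift_of_admissible_prefixWord (h : ∀ k, Admissible w (prefixWord k s)) :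
    s ∈ BetaShift w := fun r => (lexLe_iff_forall_wordLE _ _).2 fun k => by
  have hk := h (r + k)
  rw [prefixWord_add] at hk
  exact hk.right_of_append.wordLE

lemma strictAdmissible_of_two_notMem (hw : w 0 = 2) (h : 2 ∉ l) : StrictAdmissible w l := by
  induction l with
  | nil => trivial
  | cons a l ih =>
    have ha : a < 2 := by
      have : a ≠ 2 := fun ha => h (by simp [ha])
      omega
    exact ⟨Or.inl (hw ▸ ha), ih fun hl => h (List.mem_cons_of_mem _ hl)⟩

end Admissible

/-- Replace the last nonzero digit of a word by `0`. -/
def zeroLastNonzero : List (Fin 3) → List (Fin 3)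
  | [] => []
  | a :: l => if ∀ x ∈ l, x = 0 then 0 :: l else a :: zeroLastNonzero l

section ZeroLastNonzero

variable {l : List (Fin 3)} {w : Seq3}

@[simp] lemma length_zeroLastNonzero (l : List (Fin 3)) :
    (zeroLastNonzero l).length = l.length := by
  induction l with
  | nil => rfl
  | cons a l ih => unfold zeroLastNonzero; split_ifs <;> simp [ih]

lemma norm_parikh_zeroLastNonzero_sub_le (l : List (Fin 3)) :
    ‖parikh (zeroLastNonzero l) - parikh l‖ ≤ 1 := by
  induction l with
  | nil => simp [zeroLastNonzero]
  | cons a l ih =>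
    unfold zeroLastNonzero
    split_ifs
    · simp only [parikh_cons, add_sub_add_right_eq_sub]
      refine (pi_norm_le_iff_of_nonneg zero_le_one).2 fun i => ?_
      simp only [Pi.single_apply, Pi.sub_apply]
      split_ifs <;> norm_num
    · simpa using ih

lemma WordLE.wordLT_zeroLastNonzero (h : WordLE l w) (hl : ∃ x ∈ l, x ≠ 0) :
    WordLT (zeroLastNonzero l) w := by
  induction l generalizing w with
  | nil => simp at hl
  | cons a l ih =>
    unfold zeroLastNonzero
    split_ifs with hzero
    · have ha : 0 < a := Fin.pos_iff_ne_zero.2 fun ha => by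
        obtain ⟨x, hx, hx0⟩ := hl
        exact hx0 ((List.mem_cons.1 hx).elim (·.trans ha) (hzero x))
      exact Or.inl (h.elim ha.trans fun h => h.1 ▸ ha)
    · push Not at hzero
      exact h.imp_right (And.imp_right fun hle => ih hle hzero)

lemma Admissible.strictAdmissible_zeroLastNonzero (hw : w 0 = 2) (h : Admissible w l) :
    StrictAdmissible w (zeroLastNonzero l) := by
  induction l with
  | nil => trivial
  | cons a l ih =>
    by_cases hzero : ∀ x ∈ l, x = 0
    · rw [zeroLastNonzero, if_pos hzero]
      refine strictAdmissible_of_two_notMem hw fun h₂ => ?_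
      rcases List.mem_cons.1 h₂ with h₂ | h₂
      · exact absurd h₂ (by decide)
      · exact absurd (hzero 2 h₂) (by decide)
    · have hlt := h.1.wordLT_zeroLastNonzero (by push Not at hzero; simpa using Or.inr hzero)
      rw [zeroLastNonzero, if_neg hzero] at hlt ⊢
      exact ⟨hlt, ih h.2⟩

end ZeroLastNonzero

/-! ### Digit frequency sets as closures of word frequencies -/

/-- The frequency vectors of the strictly admissible words of `w`. -/
def wordFreqSet (w : Seq3) : Set (Fin 3 → ℝ) := wordFreq '' {l | StrictAdmissible w l ∧ l ≠ []}

lemma DF_mono {w w' : Seq3} (h : lexLe w w') : DF w ⊆ DF w' :=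
  fun _ ⟨s, hs, hv⟩ => ⟨s, fun r => lexLe_trans (hs r) h, hv⟩

lemma DF_subset_closure_wordFreqSet {w : Seq3} (hw : w 0 = 2) : DF w ⊆ closure (wordFreqSet w) := by
  rintro v ⟨s, hs, hv⟩
  let l (r : ℕ) := zeroLastNonzero (prefixWord r s)
  have hsmall : Tendsto (fun r : ℕ => (r : ℝ)⁻¹ • (parikh (l r) - parikh (prefixWord r s)))
      atTop (𝓝 0) := by
    refine squeeze_zero_norm (fun r => ?_) tendsto_inv_atTop_nhds_zero_nat
    rw [norm_smul, Real.norm_of_nonneg (by positivity)]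
    exact mul_le_of_le_one_right (by positivity) (norm_parikh_zeroLastNonzero_sub_le _)
  have hlim : Tendsto (fun r => wordFreq (l r)) atTop (𝓝 v) := by
    rw [← zero_add v]
    refine (hsmall.add hv).congr fun r => ?_
    simp [l, wordFreq, birk_eq_parikh, smul_sub]
  refine mem_closure_of_tendsto hlim ?_
  filter_upwards [eventually_ge_atTop 1] with r hr
  refine ⟨l r, ⟨(admissible_prefixWord hs r 0).strictAdmissible_zeroLastNonzero hw, ?_⟩, rfl⟩
  rw [← List.length_pos_iff]
  simpa [l] using Nat.pos_of_ne_zero (by omega)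

/-- The difference between the digit counts of a word and those predicted by frequency `v`. -/
noncomputable def deviation (v : Fin 3 → ℝ) (l : List (Fin 3)) : Fin 3 → ℝ :=
  parikh l - (l.length : ℝ) • v

section Deviation

variable {v : Fin 3 → ℝ}

lemma deviation_append (l l' : List (Fin 3)) :
    deviation v (l ++ l') = deviation v l + deviation v l' := by
  simp only [deviation, parikh_append, List.length_append, Nat.cast_add, add_smul]
  abel

lemma deviation_eq_length_smul (l : List (Fin 3)) :
    deviation v l = (l.length : ℝ) • (wordFreq l - v) := by
  rw [deviation, smul_sub, ← parikh_eq_length_smul_wordFreq]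

lemma norm_deviation_le (l : List (Fin 3)) : ‖deviation v l‖ ≤ (1 + ‖v‖) * l.length := by
  refine (norm_sub_le _ _).trans ?_
  rw [norm_smul, Real.norm_natCast, one_add_mul, mul_comm ‖v‖]
  gcongr
  exact norm_parikh_le l

lemma hasFreq_of_isLittleO_deviation {s : Seq3}
    (h : (fun r => deviation v (prefixWord r s)) =o[atTop] fun r : ℕ => (r : ℝ)) :
    hasFreq s v := by
  have hlim := h.tendsto_inv_smul_nhds_zero.add_const v
  rw [zero_add] at hlim
  refine hlim.congr' ?_
  filter_upwards [eventually_ge_atTop 1] with r hr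
  rw [deviation, length_prefixWord, smul_sub, inv_smul_smul₀ (by positivity), sub_add_cancel,
    birk_eq_parikh]

end Deviation

lemma exists_tendsto_atTop_forall_mul_le (ℓ : ℕ → ℕ) :
    ∃ i : ℕ → ℕ, Tendsto i atTop atTop ∧ ∀ j, i j * ℓ (i j) ≤ j := by
  refine ⟨fun j => Nat.findGreatest (fun i => i * ℓ i ≤ j) j, ?_, fun j => ?_⟩
  · refine tendsto_atTop.2 fun m => ?_
    filter_upwards [eventually_ge_atTop (max m (m * ℓ m))] with j hj
    exact Nat.le_findGreatest ((le_max_left _ _).trans hj) ((le_max_right _ _).trans hj)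
  · exact Nat.findGreatest_spec (P := fun i => i * ℓ i ≤ j) j.zero_le (by simp)

lemma exists_tendsto_atTop_forall_le_lt {a : ℕ → ℕ} (ha : StrictMono a) (ha₀ : a 0 = 0) :
    ∃ J : ℕ → ℕ, Tendsto J atTop atTop ∧ ∀ r, a (J r) ≤ r ∧ r < a (J r + 1) := by
  refine ⟨fun r => Nat.findGreatest (fun j => a j ≤ r) r, ?_, fun r => ⟨?_, ?_⟩⟩
  · refine tendsto_atTop.2 fun m => ?_
    filter_upwards [eventually_ge_atTop (a m)] with r hr
    exact Nat.le_findGreatest (ha.le_apply.trans hr) hr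
  · exact Nat.findGreatest_spec (P := fun j => a j ≤ r) r.zero_le (by simp [ha₀])
  · by_contra! hle
    exact (Nat.lt_succ_self _).not_ge (Nat.le_findGreatest (ha.le_apply.trans hle) hle)

lemma exists_seq_forall_prefixWord_eq {L : ℕ → List (Fin 3)} (hL : ∀ j, L j <+: L (j + 1))
    (hlen : ∀ j, j ≤ (L j).length) : ∃ s : Seq3, ∀ j, prefixWord (L j).length s = L j := by
  have hmono : ∀ {j k}, j ≤ k → L j <+: L k := fun {j k} h =>
    Nat.le_induction (List.prefix_refl _) (fun k _ ih => ih.trans (hL k)) k h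
  refine ⟨fun r => (L (r + 1)).getD r 0, fun j => List.ext_getElem? fun r => ?_⟩
  rw [prefixWord_getElem?]
  split_ifs with hr
  · have hr' : r < (L (r + 1)).length := hlen (r + 1)
    rw [List.getD_eq_getElem _ _ hr', ← List.getElem?_eq_getElem hr']
    rcases le_total j (r + 1) with h | h <;> obtain ⟨t, ht⟩ := hmono h
    · rw [← ht, List.getElem?_append_left hr]
    · rw [← ht, List.getElem?_append_left hr']
  · exact (List.getElem?_eq_none (not_lt.1 hr)).symm

/-- The concatenation `V₀ V₁ ⋯ V_{j-1}` of the first `j` words of a sequence of words. -/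
def concat (V : ℕ → List (Fin 3)) (j : ℕ) : List (Fin 3) := (List.range j).flatMap V

section Concat

variable {V : ℕ → List (Fin 3)} {v : Fin 3 → ℝ} {s w : Seq3}

lemma concat_succ (V : ℕ → List (Fin 3)) (j : ℕ) : concat V (j + 1) = concat V j ++ V j := by
  simp [concat, List.range_succ]

lemma strictMono_length_concat (hV : ∀ j, V j ≠ []) : StrictMono fun j => (concat V j).length :=
  strictMono_nat_of_lt_succ fun j => by
    simpa [concat_succ] using List.length_pos_iff.2 (hV j)

lemma length_concat_eq_sum (V : ℕ → List (Fin 3)) (j : ℕ) :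
    ((concat V j).length : ℝ) = ∑ k ∈ Finset.range j, ((V k).length : ℝ) := by
  induction j with
  | zero => simp [concat]
  | succ j ih => simp [Finset.sum_range_succ, ← ih, concat_succ]

lemma deviation_concat_eq_sum (V : ℕ → List (Fin 3)) (j : ℕ) :
    deviation v (concat V j) = ∑ k ∈ Finset.range j, deviation v (V k) := by
  induction j with
  | zero => simp [concat, deviation]
  | succ j ih => rw [Finset.sum_range_succ, ← ih, concat_succ, deviation_append]

lemma isLittleO_deviation_concat (hV : ∀ j, V j ≠ [])
    (hv : Tendsto (fun k => wordFreq (V k)) atTop (𝓝 v)) :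
    (fun j => deviation v (concat V j)) =o[atTop] fun j => ((concat V j).length : ℝ) := by
  have hdev : (fun k => deviation v (V k)) =o[atTop] fun k => ((V k).length : ℝ) := by
    have hsub : (fun k => wordFreq (V k) - v) =o[atTop] fun _ => (1 : ℝ) :=
      (Asymptotics.isLittleO_one_iff ℝ).2 (by simpa using hv.sub_const v)
    simpa [deviation_eq_length_smul] using
      (Asymptotics.isBigO_refl (fun k => ((V k).length : ℝ)) atTop).smul_isLittleO hsub
  have htop : Tendsto (fun j => ((concat V j).length : ℝ)) atTop atTop :=
    tendsto_natCast_atTop_atTop.comp (strictMono_length_concat hV).tendsto_atTop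
  simp only [length_concat_eq_sum, deviation_concat_eq_sum] at htop ⊢
  exact hdev.sum_range (fun k => Nat.cast_nonneg _) htop

lemma hasFreq_of_prefixWord_eq_concat (hV : ∀ j, V j ≠ [])
    (hs : ∀ j, prefixWord (concat V j).length s = concat V j)
    (hv : Tendsto (fun k => wordFreq (V k)) atTop (𝓝 v))
    (hlen : (fun k => ((V k).length : ℝ)) =o[atTop] fun k => ((concat V k).length : ℝ)) :
    hasFreq s v := by
  obtain ⟨J, hJ, hJr⟩ := exists_tendsto_atTop_forall_le_lt (strictMono_length_concat hV) rfl
  let tail (r : ℕ) := prefixWord (r - (concat V (J r)).length) (shift^[(concat V (J r)).length] s)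
  have hsplit (r : ℕ) : prefixWord r s = concat V (J r) ++ tail r := by
    rw [← hs (J r), ← prefixWord_add, Nat.add_sub_of_le (hJr r).1]
  have hJlen : (fun r => ((concat V (J r)).length : ℝ)) =O[atTop] fun r : ℕ => (r : ℝ) :=
    .of_norm_le fun r => by simpa using (hJr r).1
  have htail : (fun r => deviation v (tail r)) =O[atTop] fun r => ((V (J r)).length : ℝ) := by
    refine .of_bound (1 + ‖v‖) (Eventually.of_forall fun r => (norm_deviation_le _).trans ?_)
    have hr := (hJr r).2
    rw [concat_succ, List.length_append] at hr
    rw [Real.norm_natCast]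
    gcongr
    simp only [tail, length_prefixWord]
    omega
  refine hasFreq_of_isLittleO_deviation ?_
  simp only [hsplit, deviation_append]
  exact (((isLittleO_deviation_concat hV hv).comp_tendsto hJ).trans_isBigO hJlen).add
    (htail.trans_isLittleO ((hlen.comp_tendsto hJ).trans_isBigO hJlen))

lemma mem_betaShift_of_prefixWord_eq_concat (hV : ∀ j, V j ≠ [])
    (hs : ∀ j, prefixWord (concat V j).length s = concat V j)
    (hVw : ∀ j, StrictAdmissible w (V j)) : s ∈ BetaShift w := by
  refine mem_betaShift_of_admissible_prefixWord fun k => ?_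
  have hadm : Admissible w (concat V k) :=
    (StrictAdmissible.flatten (by simpa using fun j _ => hVw j)).admissible
  rw [← hs, ← Nat.add_sub_of_le (strictMono_length_concat hV).le_apply, prefixWord_add] at hadm
  exact hadm.left_of_append

lemma isLittleO_length_concat (hV : ∀ j, V j ≠ []) {i : ℕ → ℕ} (hi : Tendsto i atTop atTop)
    (hiV : ∀ j, i j * (V j).length ≤ j) :
    (fun k => ((V k).length : ℝ)) =o[atTop] fun k => ((concat V k).length : ℝ) := by
  refine Asymptotics.isLittleO_iff_nat_mul_le.2 fun n => ?_
  filter_upwards [hi.eventually_ge_atTop n] with k hk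
  have hle : n * (V k).length ≤ (concat V k).length :=
    (Nat.mul_le_mul_right _ hk).trans ((hiV k).trans (strictMono_length_concat hV).le_apply)
  simpa using mod_cast hle

end Concat

lemma closure_wordFreqSet_subset_DF (w : Seq3) : closure (wordFreqSet w) ⊆ DF w := by
  intro v hv
  obtain ⟨x, hx, hxv⟩ := mem_closure_iff_seq_limit.1 hv
  choose W hW hWx using hx
  obtain ⟨i, hi, hiW⟩ := exists_tendsto_atTop_forall_mul_le fun k => (W k).length
  let V (j : ℕ) := W (i j)
  have hV (j : ℕ) : V j ≠ [] := (hW _).2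
  obtain ⟨s, hs⟩ := exists_seq_forall_prefixWord_eq (L := concat V)
    (fun j => concat_succ V j ▸ List.prefix_append _ _)
    (fun j => (strictMono_length_concat hV).le_apply)
  refine ⟨s, mem_betaShift_of_prefixWord_eq_concat hV hs fun j => (hW _).1,
    hasFreq_of_prefixWord_eq_concat hV hs ?_ (isLittleO_length_concat hV hi hiW)⟩
  simpa only [V, hWx] using! hxv.comp hi

lemma DF_eq_closure_wordFreqSet {w : Seq3} (hw : w 0 = 2) : DF w = closure (wordFreqSet w) :=
  (DF_subset_closure_wordFreqSet hw).antisymm (closure_wordFreqSet_subset_DF w)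

lemma StrictAdmissible.wordFreq_mem_DF {w : Seq3} {l : List (Fin 3)} (h : StrictAdmissible w l)
    (hl : l ≠ []) : wordFreq l ∈ DF w :=
  closure_wordFreqSet_subset_DF w (subset_closure ⟨l, ⟨h, hl⟩, rfl⟩)

/-! ### Convexity and compactness of digit frequency sets -/

lemma smul_add_smul_mem_wordFreqSet {w : Seq3} {x y : Fin 3 → ℝ} (hx : x ∈ wordFreqSet w)
    (hy : y ∈ wordFreqSet w) {p q : ℕ} (hpq : (p : ℝ) + q ≠ 0) :
    ((p : ℝ) + q)⁻¹ • ((p : ℝ) • x + (q : ℝ) • y) ∈ wordFreqSet w := by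
  obtain ⟨l, ⟨hl, hlne⟩, rfl⟩ := hx
  obtain ⟨m, ⟨hm, hmne⟩, rfl⟩ := hy
  have hlm : (l.length : ℝ) * m.length ≠ 0 :=
    mul_ne_zero (length_cast_pos hlne).ne' (length_cast_pos hmne).ne'
  let L := (List.replicate (p * m.length) l).flatten ++ (List.replicate (q * l.length) m).flatten
  have hLlen : (L.length : ℝ) = l.length * m.length * (p + q) := by
    simp only [L, List.length_append, List.length_flatten, List.map_replicate,
      List.sum_replicate, smul_eq_mul]
    push_cast
    ring
  have hLparikh : parikh L =
      ((l.length : ℝ) * m.length) • ((p : ℝ) • wordFreq l + (q : ℝ) • wordFreq m) := by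
    simp only [L, parikh_append, parikh_flatten_replicate, smul_add, smul_smul]
    rw [parikh_eq_length_smul_wordFreq l, parikh_eq_length_smul_wordFreq m, smul_smul, smul_smul]
    push_cast
    ring_nf
  refine ⟨L, ⟨?_, fun hL => ?_⟩, ?_⟩
  · exact (StrictAdmissible.flatten fun l' hl' => List.eq_of_mem_replicate hl' ▸ hl).append
      (StrictAdmissible.flatten fun l' hl' => List.eq_of_mem_replicate hl' ▸ hm)
  · rw [hL, List.length_nil, Nat.cast_zero] at hLlen
    exact mul_ne_zero hlm hpq hLlen.symm
  · rw [wordFreq, hLparikh, hLlen, smul_smul, mul_comm, mul_inv, ← mul_assoc, mul_inv_cancel₀ hlm,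
      one_mul]

lemma convex_closure_wordFreqSet (w : Seq3) : Convex ℝ (closure (wordFreqSet w)) := by
  intro a ha b hb α β hα hβ hαβ
  have hcont : Continuous fun p : (Fin 3 → ℝ) × (Fin 3 → ℝ) => α • p.1 + β • p.2 := by fun_prop
  rw [← closure_closure]
  refine map_mem_closure₂ (f := fun x y => α • x + β • y) hcont ha hb fun x hx y hy => ?_
  let p (k : ℕ) := ⌊α * (k : ℝ)⌋₊
  let q (k : ℕ) := ⌊β * (k : ℝ)⌋₊
  have hp : Tendsto (fun k => (p k : ℝ) / k) atTop (𝓝 α) :=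
    (tendsto_nat_floor_mul_div_atTop hα).comp tendsto_natCast_atTop_atTop
  have hq : Tendsto (fun k => (q k : ℝ) / k) atTop (𝓝 β) :=
    (tendsto_nat_floor_mul_div_atTop hβ).comp tendsto_natCast_atTop_atTop
  have hpq : Tendsto (fun k => (p k : ℝ) / k + q k / k) atTop (𝓝 1) := hαβ ▸ hp.add hq
  have hlim := (hpq.inv₀ one_ne_zero).smul ((hp.smul_const x).add (hq.smul_const y))
  rw [inv_one, one_smul] at hlim
  refine mem_closure_of_tendsto hlim ?_
  filter_upwards [hpq.eventually_ne one_ne_zero, eventually_ge_atTop 1] with k hk hk1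
  have hk0 : (k : ℝ) ≠ 0 := by positivity
  have hsum : (p k : ℝ) + q k ≠ 0 := fun h => hk (by rw [← add_div, h, zero_div])
  convert smul_add_smul_mem_wordFreqSet hx hy hsum using 1
  ext j
  simp only [Pi.smul_apply, Pi.add_apply, smul_eq_mul]
  field_simp

lemma wordFreqSet_subset_closedBall (w : Seq3) : wordFreqSet w ⊆ Metric.closedBall 0 1 := by
  rintro _ ⟨l, -, rfl⟩
  simpa using norm_wordFreq_le_one l

section DF

variable {w w' : Seq3}

lemma convex_DF (hw : w 0 = 2) : Convex ℝ (DF w) :=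
  DF_eq_closure_wordFreqSet hw ▸ convex_closure_wordFreqSet w

lemma isCompact_DF (hw : w 0 = 2) : IsCompact (DF w) :=
  DF_eq_closure_wordFreqSet hw ▸ (isCompact_closedBall 0 1).of_isClosed_subset isClosed_closure
    (closure_minimal (wordFreqSet_subset_closedBall w) Metric.isClosed_closedBall)

lemma nonneg_of_mem_DF (hw : w 0 = 2) (g : (Fin 3 → ℝ) →ₗ[ℝ] ℝ)
    (hg : ∀ l, StrictAdmissible w l → 0 ≤ g (parikh l)) {x : Fin 3 → ℝ} (hx : x ∈ DF w) :
    0 ≤ g x := by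
  have hclosed : IsClosed {x | 0 ≤ g x} :=
    isClosed_le continuous_const g.continuous_of_finiteDimensional
  rw [DF_eq_closure_wordFreqSet hw] at hx
  refine closure_minimal ?_ hclosed hx
  rintro _ ⟨l, ⟨hl, -⟩, rfl⟩
  change 0 ≤ g (wordFreq l)
  rw [wordFreq, map_smul]
  exact mul_nonneg (by positivity) (hg l hl)

lemma coordSum_eq_one_of_mem_DF (hw : w 0 = 2) {x : Fin 3 → ℝ} (hx : x ∈ DF w) :
    coordSum x = 1 := by
  have hclosed : IsClosed {x | coordSum x = 1} :=
    isClosed_eq coordSum.continuous_of_finiteDimensional continuous_const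
  rw [DF_eq_closure_wordFreqSet hw] at hx
  refine closure_minimal ?_ hclosed hx
  rintro _ ⟨l, ⟨-, hl⟩, rfl⟩
  exact coordSum_wordFreq hl

lemma stdVec_zero_mem_DF (hw : w 0 = 2) : stdVec 0 ∈ DF w := by
  have h := (strictAdmissible_of_two_notMem (l := [0]) hw (by decide)).wordFreq_mem_DF (by simp)
  simpa [wordFreq] using h

lemma parikh_prefixWord_mul (M k : ℕ) (s : Seq3) : parikh (prefixWord (M * k) s) =
    ∑ j ∈ Finset.range k, parikh (prefixWord M (shift^[M * j] s)) := by
  induction k with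
  | zero => simp [prefixWord]
  | succ k ih => rw [Finset.sum_range_succ, ← ih, Nat.mul_succ, prefixWord_add, parikh_append]

lemma exists_mem_DF_norm_sub_le (hw' : w' 0 = 2) {M : ℕ} (hM : 1 ≤ M)
    (hww' : Set.EqOn w w' (Set.Iio M)) {s : Seq3} (hs : s ∈ BetaShift w) (r : ℕ) :
    ∃ y ∈ DF w', ‖(M : ℝ)⁻¹ • parikh (prefixWord M (shift^[r] s)) - y‖ ≤ (M : ℝ)⁻¹ := by
  let l := zeroLastNonzero (prefixWord M (shift^[r] s))
  have hl : StrictAdmissible w' l := by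
    refine Admissible.strictAdmissible_zeroLastNonzero hw' (.congr (w := w) ?_ ?_)
    · rwa [length_prefixWord]
    · exact admissible_prefixWord hs M r
  have hlen : l.length = M := by simp [l]
  have hlne : l ≠ [] := by
    rw [← List.length_pos_iff]
    omega
  refine ⟨wordFreq l, hl.wordFreq_mem_DF hlne, ?_⟩
  rw [wordFreq, hlen, ← smul_sub, norm_smul, norm_sub_rev, Real.norm_of_nonneg (by positivity)]
  exact mul_le_of_le_one_right (by positivity) (norm_parikh_zeroLastNonzero_sub_le _)

lemma infDist_DF_le_of_eqOn (hw' : w' 0 = 2) {M : ℕ} (hM : 1 ≤ M)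
    (hww' : Set.EqOn w w' (Set.Iio M)) {v : Fin 3 → ℝ} (hv : v ∈ DF w) :
    Metric.infDist v (DF w') ≤ (M : ℝ)⁻¹ := by
  obtain ⟨s, hs, hsv⟩ := hv
  choose y hy hyle using exists_mem_DF_norm_sub_le hw' hM hww' hs
  have hlim : Tendsto (fun k : ℕ => M * k) atTop atTop := tendsto_id.const_mul_atTop' (by omega)
  refine le_of_tendsto (((Metric.continuous_infDist_pt (DF w')).tendsto v).comp (hsv.comp hlim)) ?_
  filter_upwards [eventually_ge_atTop 1] with k hk
  have hk0 : (k : ℝ) ≠ 0 := by positivity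
  have hmem : ∑ j ∈ Finset.range k, (k : ℝ)⁻¹ • y (M * j) ∈ DF w' :=
    (convex_DF hw').sum_mem (fun _ _ => by positivity) (by simp [hk0]) fun j _ => hy _
  refine (Metric.infDist_le_dist_of_mem hmem).trans ?_
  have hdiff : (((M * k : ℕ) : ℝ)⁻¹ • birk s (M * k)) -
      ∑ j ∈ Finset.range k, (k : ℝ)⁻¹ • y (M * j) = (k : ℝ)⁻¹ • ∑ j ∈ Finset.range k,
        ((M : ℝ)⁻¹ • parikh (prefixWord M (shift^[M * j] s)) - y (M * j)) := by
    rw [birk_eq_parikh, parikh_prefixWord_mul, Nat.cast_mul, mul_inv, mul_comm, mul_smul]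
    simp only [Finset.sum_sub_distrib, smul_sub, Finset.smul_sum]
  simp only [Function.comp]
  rw [dist_eq_norm, hdiff, norm_smul, Real.norm_of_nonneg (by positivity)]
  calc (k : ℝ)⁻¹ * ‖∑ j ∈ Finset.range k, _‖ ≤ (k : ℝ)⁻¹ * ∑ _j ∈ Finset.range k, (M : ℝ)⁻¹ := by
        gcongr
        exact norm_sum_le_of_le _ fun j _ => hyle _
    _ = (M : ℝ)⁻¹ := by simp [hk0]

end DF

/-! ### The substitutions `0 ↦ 1`, `1 ↦ 20ⁿ⁺¹`, `2 ↦ 20ⁿ` -/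

/-- The concatenation of a word and a sequence. -/
def appendSeq (l : List (Fin 3)) (s : Seq3) : Seq3 := fun k => l.getD k (s (k - l.length))

@[simp] lemma cons_appendSeq_zero (a : Fin 3) (l : List (Fin 3)) (s : Seq3) :
    appendSeq (a :: l) s 0 = a := rfl

@[simp] lemma shift_cons_appendSeq (a : Fin 3) (l : List (Fin 3)) (s : Seq3) :
    shift (appendSeq (a :: l) s) = appendSeq l s := by
  ext k
  simp [shift, appendSeq]

lemma append_appendSeq (l l' : List (Fin 3)) (s : Seq3) :
    appendSeq (l ++ l') s = appendSeq l (appendSeq l' s) := by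
  ext k
  rcases lt_or_ge k l.length with h | h
  · simp [appendSeq, List.getElem?_append_left h, List.getElem?_eq_getElem h]
  · simp [appendSeq, List.getElem?_append_right h, List.getElem?_eq_none h, Nat.sub_sub]

lemma appendSeq_apply_of_lt {l : List (Fin 3)} {k : ℕ} (hk : k < l.length) (s : Seq3) :
    appendSeq l s k = l[k] := by
  simp [appendSeq, hk]

lemma eqOn_appendSeq {M : ℕ} {s t : Seq3} (l : List (Fin 3)) (h : Set.EqOn s t (Set.Iio M)) :
    Set.EqOn (appendSeq l s) (appendSeq l t) (Set.Iio (l.length + M)) := by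
  intro k hk
  rcases lt_or_ge k l.length with hkl | hkl
  · rw [appendSeq_apply_of_lt hkl, appendSeq_apply_of_lt hkl]
  · simp only [appendSeq, List.getD_eq_default _ _ hkl]
    exact h (Nat.sub_lt_left_of_lt_add hkl hk)

lemma toLex_appendSeq_lt {s t : Seq3} (l : List (Fin 3)) (h : toLex s < toLex t) :
    toLex (appendSeq l s) < toLex (appendSeq l t) := by
  obtain ⟨n, hagree, hlt⟩ := h
  refine ⟨l.length + n, fun k hk => eqOn_appendSeq l hagree hk, ?_⟩
  simpa [appendSeq] using hlt

lemma wordLT_append_appendSeq_iff (l x : List (Fin 3)) (s : Seq3) :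
    WordLT (l ++ x) (appendSeq l s) ↔ WordLT x s := by
  induction l with
  | nil => rfl
  | cons a l ih => simp [WordLT, ih]

lemma fin_three_cases (a : Fin 3) : a = 0 ∨ a = 1 ∨ a = 2 := by omega

/-- The image of a digit under the `n`-th substitution. -/
def block (n : ℕ) : Fin 3 → List (Fin 3)
  | 0 => [1]
  | 1 => 2 :: List.replicate (n + 1) 0
  | 2 => 2 :: List.replicate n 0

lemma block_one_eq (n : ℕ) : block n 1 = block n 2 ++ [0] := by
  simp [block, List.replicate_succ']

lemma length_block_pos (n : ℕ) (a : Fin 3) : 0 < (block n a).length := by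
  rcases fin_three_cases a with rfl | rfl | rfl <;> simp [block]

/-- The `n`-th substitution on words. -/
def substWord (n : ℕ) (l : List (Fin 3)) : List (Fin 3) := l.flatMap (block n)

@[simp] lemma substWord_cons (n : ℕ) (a : Fin 3) (l : List (Fin 3)) :
    substWord n (a :: l) = block n a ++ substWord n l := rfl

lemma substWord_append (n : ℕ) (l l' : List (Fin 3)) :
    substWord n (l ++ l') = substWord n l ++ substWord n l' := List.flatMap_append

lemma length_le_length_substWord (n : ℕ) (l : List (Fin 3)) :
    l.length ≤ (substWord n l).length := by
  induction l with
  | nil => rfl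
  | cons a l ih =>
    rw [substWord_cons, List.length_append, List.length_cons]
    have := length_block_pos n a
    omega

/-- The `n`-th substitution on sequences. Blocks are nonempty, so the first `k + 1` digits of the
sequence determine the digit `k` of its image. -/
def substSeq (n : ℕ) (s : Seq3) : Seq3 := fun k => (substWord n (prefixWord (k + 1) s)).getD k 0

lemma substSeq_apply_eq_getD {n k K : ℕ} (hK : k < K) (s : Seq3) :
    substSeq n s k = (substWord n (prefixWord K s)).getD k 0 := by
  obtain ⟨j, rfl⟩ := Nat.exists_eq_add_of_le (Nat.succ_le_of_lt hK)
  have hlen := length_le_length_substWord n (prefixWord (k + 1) s)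
  rw [length_prefixWord] at hlen
  rw [prefixWord_add, substWord_append, List.getD_append _ _ _ _ hlen, substSeq]

lemma substSeq_eq_appendSeq (n : ℕ) (s : Seq3) :
    substSeq n s = appendSeq (block n (s 0)) (substSeq n (shift s)) := by
  ext k : 1
  change (block n (s 0) ++ substWord n (prefixWord k (shift s))).getD k 0 = _
  rcases lt_or_ge k (block n (s 0)).length with hk | hk
  · rw [List.getD_append _ _ _ _ hk, appendSeq_apply_of_lt hk, List.getD_eq_getElem _ _ hk]
  · have hlt : k - (block n (s 0)).length < k :=
      Nat.sub_lt_self (length_block_pos n (s 0)) hk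
    rw [List.getD_append_right _ _ _ _ hk, appendSeq, List.getD_eq_default _ _ hk,
      substSeq_apply_eq_getD hlt]

lemma substSeq_appendSeq (n : ℕ) (l : List (Fin 3)) (s : Seq3) :
    substSeq n (appendSeq l s) = appendSeq (substWord n l) (substSeq n s) := by
  induction l with
  | nil => rfl
  | cons a l ih =>
    rw [substSeq_eq_appendSeq, cons_appendSeq_zero, shift_cons_appendSeq, ih, ← append_appendSeq,
      substWord_cons]

lemma substSeq_apply_zero_ne_zero (n : ℕ) (s : Seq3) : substSeq n s 0 ≠ 0 := by
  rw [substSeq_eq_appendSeq]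
  rcases fin_three_cases (s 0) with h | h | h <;> simp [h, block]

lemma substSeq_apply_zero_of_ne (n : ℕ) {s : Seq3} (hs : s 0 ≠ 0) : substSeq n s 0 = 2 := by
  rw [substSeq_eq_appendSeq]
  rcases fin_three_cases (s 0) with h | h | h
  · exact absurd h hs
  all_goals simp [h, block]

lemma substSeq_apply_zero_eq_two (n : ℕ) {s : Seq3} (hs : s 0 = 2) : substSeq n s 0 = 2 :=
  substSeq_apply_zero_of_ne n (by rw [hs]; decide)

lemma WordLT.substWord (n : ℕ) {l : List (Fin 3)} {w : Seq3} (h : WordLT l w) :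
    WordLT (substWord n l) (substSeq n w) := by
  induction l generalizing w with
  | nil => exact h.elim
  | cons a l ih =>
    rw [substWord_cons]
    rcases h with hlt | ⟨heq, hl⟩
    · rcases fin_three_cases a with rfl | rfl | rfl
      · exact Or.inl (by rw [substSeq_apply_zero_of_ne n hlt.ne']; decide)
      · have hw : w 0 = 2 := by omega
        rw [substSeq_eq_appendSeq, hw, block_one_eq, List.append_assoc,
          wordLT_append_appendSeq_iff]
        exact Or.inl (Fin.pos_iff_ne_zero.2 (substSeq_apply_zero_ne_zero _ _))
      · omega
    · rw [substSeq_eq_appendSeq, ← heq, wordLT_append_appendSeq_iff]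
      exact ih hl

lemma StrictAdmissible.substWord (n : ℕ) {l : List (Fin 3)} {w : Seq3} (hw : w 0 = 2)
    (h : StrictAdmissible w l) : StrictAdmissible (substSeq n w) (substWord n l) := by
  induction l with
  | nil => trivial
  | cons a l ih =>
    have hlt := h.1.substWord n
    have hzeros (m : ℕ) : StrictAdmissible (substSeq n w) (List.replicate m 0) :=
      strictAdmissible_of_two_notMem (substSeq_apply_zero_eq_two n hw)
        fun h => absurd (List.eq_of_mem_replicate h) (by decide)
    rw [substWord_cons] at hlt ⊢
    rcases fin_three_cases a with rfl | rfl | rfl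
    · exact ⟨hlt, ih h.2⟩
    all_goals exact ⟨hlt, (hzeros _).append (ih h.2)⟩

lemma toLex_substSeq_lt (k : ℕ) {s t : Seq3} (h : toLex s < toLex t) :
    toLex (substSeq k s) < toLex (substSeq k t) := by
  obtain ⟨n, hagree, hlt⟩ := h
  change s n < t n at hlt
  induction n generalizing s t with
  | zero =>
    rcases fin_three_cases (s 0) with hs | hs | hs
    · apply toLex_lt_of_apply_zero_lt
      rw [substSeq_apply_zero_of_ne k (ne_bot_of_gt hlt), substSeq_eq_appendSeq, hs]
      exact (by decide : (1 : Fin 3) < 2)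
    · have ht : t 0 = 2 := by omega
      rw [substSeq_eq_appendSeq k s, substSeq_eq_appendSeq k t, hs, ht, block_one_eq,
        append_appendSeq]
      exact toLex_appendSeq_lt _ (toLex_lt_of_apply_zero_lt
        (Fin.pos_iff_ne_zero.2 (substSeq_apply_zero_ne_zero _ _)))
    · omega
  | succ n ih =>
    have h₀ : s 0 = t 0 := hagree 0 (Nat.succ_pos n)
    rw [substSeq_eq_appendSeq k s, substSeq_eq_appendSeq k t, h₀]
    exact toLex_appendSeq_lt _ (ih (fun i hi => hagree (i + 1) (Nat.succ_lt_succ hi)) hlt)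

lemma lexLe_substSeq (k : ℕ) {s t : Seq3} (h : lexLe s t) :
    lexLe (substSeq k s) (substSeq k t) := by
  rcases h with rfl | h
  · exact lexLe_refl _
  · exact Or.inr (toLex_substSeq_lt k h)

lemma exists_shift_substSeq_eq (n : ℕ) (s : Seq3) :
    ∃ i, shift (substSeq n s) = appendSeq (List.replicate i 0) (substSeq n (shift s)) := by
  rw [substSeq_eq_appendSeq]
  rcases fin_three_cases (s 0) with h | h | h <;> rw [h, block, shift_cons_appendSeq]
  exacts [⟨0, rfl⟩, ⟨n + 1, rfl⟩, ⟨n, rfl⟩]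

lemma exists_shift_iterate_substSeq_eq (n r : ℕ) (s : Seq3) :
    ∃ i j, shift^[r] (substSeq n s) =
      appendSeq (List.replicate i 0) (substSeq n (shift^[j] s)) := by
  induction r with
  | zero => exact ⟨0, 0, rfl⟩
  | succ r ih =>
    obtain ⟨i, j, h⟩ := ih
    rw [Function.iterate_succ_apply', h]
    cases i with
    | succ i => exact ⟨i, j, shift_cons_appendSeq _ _ _⟩
    | zero =>
      obtain ⟨i, hi⟩ := exists_shift_substSeq_eq n (shift^[j] s)
      exact ⟨i, j + 1, by rw [Function.iterate_succ_apply', ← hi]; rfl⟩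

lemma substSeq_mem_MaxSet (n : ℕ) {w : Seq3} (hw : w ∈ MaxSet) : substSeq n w ∈ MaxSet := by
  have h₂ := substSeq_apply_zero_eq_two n hw.1
  refine ⟨h₂, fun r => ?_⟩
  obtain ⟨i, j, h⟩ := exists_shift_iterate_substSeq_eq n r w
  rw [h]
  cases i with
  | zero => exact lexLe_substSeq n (hw.2 j)
  | succ i =>
    have hlt : (0 : Fin 3) < substSeq n w 0 := h₂ ▸ (by decide)
    exact Or.inr (toLex_lt_of_apply_zero_lt hlt)

lemma eqOn_substSeq (n : ℕ) {M : ℕ} {s t : Seq3} (h : Set.EqOn s t (Set.Iio M)) :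
    Set.EqOn (substSeq n s) (substSeq n t) (Set.Iio M) := by
  induction M generalizing s t with
  | zero => simp
  | succ M ih =>
    have h₀ : s 0 = t 0 := h (Nat.succ_pos M)
    rw [substSeq_eq_appendSeq n s, substSeq_eq_appendSeq n t, h₀]
    refine (eqOn_appendSeq _ (ih fun i hi => h (Nat.succ_lt_succ hi))).mono
      (Set.Iio_subset_Iio ?_)
    have := length_block_pos n (t 0)
    omega

/-- The first digit of a twofold image is always `2`, so two substitutions gain a digit. -/
lemma eqOn_substSeq_substSeq (n m : ℕ) {M : ℕ} {s t : Seq3} (h : Set.EqOn s t (Set.Iio M)) :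
    Set.EqOn (substSeq n (substSeq m s)) (substSeq n (substSeq m t)) (Set.Iio (M + 1)) := by
  induction M generalizing s t with
  | zero =>
    intro i hi
    obtain rfl : i = 0 := Nat.lt_one_iff.1 hi
    rw [substSeq_apply_zero_of_ne _ (substSeq_apply_zero_ne_zero _ _),
      substSeq_apply_zero_of_ne _ (substSeq_apply_zero_ne_zero _ _)]
  | succ M ih =>
    have h₀ : s 0 = t 0 := h (Nat.succ_pos M)
    rw [substSeq_eq_appendSeq m s, substSeq_eq_appendSeq m t, h₀, substSeq_appendSeq,
      substSeq_appendSeq]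
    refine (eqOn_appendSeq _ (ih fun i hi => h (Nat.succ_lt_succ hi))).mono
      (Set.Iio_subset_Iio ?_)
    have := length_block_pos m (t 0)
    have := length_le_length_substWord n (block m (t 0))
    omega

lemma eqOn_of_lexLe_of_lexLe {M : ℕ} {a w b : Seq3} (haw : lexLe a w) (hwb : lexLe w b)
    (hab : Set.EqOn a b (Set.Iio M)) : Set.EqOn a w (Set.Iio M) := by
  intro i
  induction i using Nat.strong_induction_on with
  | _ i ih =>
    intro hi
    have hlt (j : ℕ) (hj : j < i) : j ∈ Set.Iio M := hj.trans hi
    apply le_antisymm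
    · exact (lexLe_iff_forall_agree _ _).1 haw i fun j hj => ih j hj (hlt j hj)
    · rw [hab hi]
      exact (lexLe_iff_forall_agree _ _).1 hwb i fun j hj =>
        (ih j hj (hlt j hj)).symm.trans (hab (hlt j hj))

/-! ### Iterated substitutions -/

/-- The least sequence `2000…` starting with `2`. -/
def twoZeros : Seq3 := appendSeq [2] 0

/-- The greatest sequence `222…`. -/
def allTwos : Seq3 := fun _ => 2

lemma twoZeros_succ (k : ℕ) : twoZeros (k + 1) = 0 := rfl

lemma twoZeros_mem_MaxSet : twoZeros ∈ MaxSet := by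
  refine ⟨rfl, fun r => ?_⟩
  cases r with
  | zero => exact lexLe_refl _
  | succ r =>
    have h₀ : (shift^[r + 1] twoZeros) 0 = 0 := by rw [shift_iterate_apply, add_zero, twoZeros_succ]
    exact Or.inr (toLex_lt_of_apply_zero_lt (h₀ ▸ (by decide : (0 : Fin 3) < 2)))

lemma lexLe_allTwos (s : Seq3) : lexLe s allTwos :=
  (lexLe_iff_forall_agree _ _).2 fun _ _ => Fin.le_last _

lemma twoZeros_lexLe {s : Seq3} (hs : s 0 = 2) : lexLe twoZeros s := by
  rw [lexLe_iff_forall_agree]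
  rintro (_ | n) _
  · exact hs.symm.le
  · exact Fin.zero_le _

lemma eqOn_substSeq_twoZeros (n : ℕ) {s : Seq3} (hs : s 0 = 2) :
    Set.EqOn (substSeq n s) twoZeros (Set.Iio (n + 1)) := by
  rw [substSeq_eq_appendSeq, hs]
  rintro (_ | i) hi
  · rfl
  · rw [appendSeq_apply_of_lt (by simpa [block] using hi), twoZeros_succ]
    simp [block]

/-- The composition of the substitutions indexed by `u`, the first one being applied last. -/
def substWords (u : List ℕ) (l : List (Fin 3)) : List (Fin 3) := u.foldr substWord l

/-- The composition of the substitutions indexed by `u`, the first one being applied last. -/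
def substSeqs (u : List ℕ) (s : Seq3) : Seq3 := u.foldr substSeq s

/-- The left end point of the interval of sequences coded by `u`. -/
def lowerSeq (u : List ℕ) : Seq3 := substSeqs u twoZeros

/-- The right end point of the interval of sequences coded by `u`. -/
def upperSeq (u : List ℕ) : Seq3 := substSeqs u allTwos

section Iterated

variable (u : List ℕ) {s t w : Seq3}

lemma substSeqs_append (v : List ℕ) (s : Seq3) :
    substSeqs (u ++ v) s = substSeqs u (substSeqs v s) := List.foldr_append

lemma substSeqs_apply_zero (hs : s 0 = 2) : substSeqs u s 0 = 2 := by
  induction u with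
  | nil => exact hs
  | cons n u ih => exact substSeq_apply_zero_eq_two n ih

lemma substSeqs_mem_MaxSet (hs : s ∈ MaxSet) : substSeqs u s ∈ MaxSet := by
  induction u with
  | nil => exact hs
  | cons n u ih => exact substSeq_mem_MaxSet n ih

lemma lowerSeq_apply_zero : lowerSeq u 0 = 2 := substSeqs_apply_zero u rfl

lemma upperSeq_apply_zero : upperSeq u 0 = 2 := substSeqs_apply_zero u rfl

lemma lowerSeq_mem_MaxSet : lowerSeq u ∈ MaxSet := substSeqs_mem_MaxSet u twoZeros_mem_MaxSet

lemma lexLe_substSeqs (h : lexLe s t) : lexLe (substSeqs u s) (substSeqs u t) := by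
  induction u with
  | nil => exact h
  | cons n u ih => exact lexLe_substSeq n ih

lemma toLex_substSeqs_lt (h : toLex s < toLex t) :
    toLex (substSeqs u s) < toLex (substSeqs u t) := by
  induction u with
  | nil => exact h
  | cons n u ih => exact toLex_substSeq_lt n ih

lemma eqOn_substSeqs {M : ℕ} (h : Set.EqOn s t (Set.Iio M)) :
    Set.EqOn (substSeqs u s) (substSeqs u t) (Set.Iio M) := by
  induction u with
  | nil => exact h
  | cons n u ih => exact eqOn_substSeq n ih

variable {u} in
lemma eqOn_substSeqs_of_le_length {M : ℕ} (hu : 2 * M ≤ u.length) (s t : Seq3) :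
    Set.EqOn (substSeqs u s) (substSeqs u t) (Set.Iio M) := by
  induction M generalizing u with
  | zero => simp
  | succ M ih =>
    match u, hu with
    | n :: m :: u, hu =>
      refine eqOn_substSeq_substSeq n m (ih (u := u) ?_)
      simp only [List.length_cons] at hu
      omega

lemma StrictAdmissible.substWords {l : List (Fin 3)} (hw : w 0 = 2) (h : StrictAdmissible w l) :
    StrictAdmissible (substSeqs u w) (substWords u l) := by
  induction u with
  | nil => exact h
  | cons n u ih => exact ih.substWord n (substSeqs_apply_zero u hw)

end Iterated

/-! ### Abelianized substitutions -/

/-- The action of the `n`-th substitution on Parikh vectors. -/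
def substEquiv (n : ℕ) : (Fin 3 → ℝ) ≃ₗ[ℝ] (Fin 3 → ℝ) where
  toFun x := ![(n + 1) * x 1 + n * x 2, x 0, x 1 + x 2]
  invFun x := ![x 1, x 0 - n * x 2, (n + 1) * x 2 - x 0]
  map_add' x y := by ext i; fin_cases i <;> simp <;> ring
  map_smul' c x := by ext i; fin_cases i <;> simp <;> ring
  left_inv x := by ext i; fin_cases i <;> simp <;> ring
  right_inv x := by ext i; fin_cases i <;> simp <;> ring

lemma substEquiv_apply (n : ℕ) (x : Fin 3 → ℝ) :
    substEquiv n x = ![(n + 1) * x 1 + n * x 2, x 0, x 1 + x 2] := rfl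

lemma substEquiv_symm_apply (n : ℕ) (x : Fin 3 → ℝ) :
    (substEquiv n).symm x = ![x 1, x 0 - n * x 2, (n + 1) * x 2 - x 0] := rfl

lemma substEquiv_stdVec_one (n : ℕ) :
    substEquiv n (stdVec 1) = substEquiv n (stdVec 2) + stdVec 0 := by
  ext i; fin_cases i <;> simp [substEquiv_apply]

lemma parikh_block (n : ℕ) (a : Fin 3) : parikh (block n a) = substEquiv n (stdVec a) := by
  rcases fin_three_cases a with rfl | rfl | rfl <;>
    · rw [block]
      ext i
      fin_cases i <;> simp [substEquiv_apply]

lemma parikh_substWord (n : ℕ) (l : List (Fin 3)) :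
    parikh (substWord n l) = substEquiv n (parikh l) := by
  induction l with
  | nil => simp [substWord]
  | cons a l ih =>
    rw [substWord_cons, parikh_append, ih, parikh_block, parikh_cons, map_add]

/-- The action on Parikh vectors of the composition of the substitutions indexed by `u`. -/
def substEquivs : List ℕ → (Fin 3 → ℝ) ≃ₗ[ℝ] (Fin 3 → ℝ)
  | [] => LinearEquiv.refl ℝ _
  | n :: u => (substEquivs u).trans (substEquiv n)

lemma substEquivs_cons (n : ℕ) (u : List ℕ) (x : Fin 3 → ℝ) :
    substEquivs (n :: u) x = substEquiv n (substEquivs u x) := rfl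

lemma substEquivs_append (u v : List ℕ) (x : Fin 3 → ℝ) :
    substEquivs (u ++ v) x = substEquivs u (substEquivs v x) := by
  induction u with
  | nil => rfl
  | cons n u ih => rw [List.cons_append, substEquivs_cons, ih, substEquivs_cons]

lemma parikh_substWords (u : List ℕ) (l : List (Fin 3)) :
    parikh (substWords u l) = substEquivs u (parikh l) := by
  induction u with
  | nil => rfl
  | cons n u ih => rw [substEquivs_cons, ← ih, ← parikh_substWord]; rfl

/-! ### Parsing strictly admissible words into blocks -/

/-- The word spelled by a list of tokens, in which `some a` stands for the block of `a` and `none`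
for a stray digit `0`. -/
def expand (n : ℕ) (τ : List (Option (Fin 3))) : List (Fin 3) :=
  τ.flatMap fun o => o.elim [0] (block n)

/-- The parsing is greedy: no block `20ⁿ` is followed by a stray `0`, with which it would form
the block `20ⁿ⁺¹`. -/
def IsGreedy (τ : List (Option (Fin 3))) : Prop :=
  τ.IsChain fun a b => a = some 2 → b ≠ none

lemma expand_cons_none (n : ℕ) (τ : List (Option (Fin 3))) :
    expand n (none :: τ) = 0 :: expand n τ := rfl

lemma expand_cons_some (n : ℕ) (a : Fin 3) (τ : List (Option (Fin 3))) :
    expand n (some a :: τ) = block n a ++ expand n τ := rfl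

lemma expand_append (n : ℕ) (τ τ' : List (Option (Fin 3))) :
    expand n (τ ++ τ') = expand n τ ++ expand n τ' := List.flatMap_append

lemma exists_eq_cons_none_of_expand_eq {n : ℕ} {τ : List (Option (Fin 3))} {l : List (Fin 3)}
    (h : expand n τ = 0 :: l) : ∃ τ', τ = none :: τ' ∧ expand n τ' = l := by
  match τ, h with
  | [], h => simp [expand] at h
  | none :: τ, h => exact ⟨τ, rfl, List.tail_eq_of_cons_eq h⟩
  | some a :: τ, h =>
    rw [expand_cons_some] at h
    rcases fin_three_cases a with rfl | rfl | rfl <;> simp [block] at h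

lemma exists_isGreedy_of_expand_eq_zeros_append {n k : ℕ} {τ : List (Option (Fin 3))}
    {l : List (Fin 3)} (h : expand n τ = List.replicate k 0 ++ l) (hτ : IsGreedy τ) :
    ∃ τ', expand n τ' = l ∧ IsGreedy τ' := by
  induction k generalizing τ with
  | zero => exact ⟨τ, h, hτ⟩
  | succ k ih =>
    rw [List.replicate_succ, List.cons_append] at h
    obtain ⟨τ', rfl, h'⟩ := exists_eq_cons_none_of_expand_eq h
    exact ih h' hτ.of_cons

lemma WordLT.zeros_isPrefix {k : ℕ} {l : List (Fin 3)} {s : Seq3}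
    (h : WordLT l (appendSeq (List.replicate k 0) s)) : List.replicate k 0 <+: l := by
  induction k generalizing l with
  | zero => exact List.nil_prefix
  | succ k ih =>
    cases l with
    | nil => exact h.elim
    | cons a l =>
      rw [List.replicate_succ, WordLT, cons_appendSeq_zero, shift_cons_appendSeq] at h
      rcases h with h | ⟨rfl, h⟩
      · exact absurd h (Fin.not_lt_zero _)
      · exact List.cons_prefix_cons.2 ⟨rfl, ih h⟩

lemma StrictAdmissible.exists_isGreedy {n : ℕ} {w : Seq3} (hw : w 0 = 2) {l : List (Fin 3)}
    (h : StrictAdmissible (substSeq n w) l) : ∃ τ, expand n τ = l ∧ IsGreedy τ := by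
  induction l with
  | nil => exact ⟨[], rfl, List.isChain_nil⟩
  | cons a l ih =>
    obtain ⟨τ, hτl, hτ⟩ := ih h.2
    rcases fin_three_cases a with rfl | rfl | rfl
    · exact ⟨none :: τ, by rw [expand_cons_none, hτl], hτ.cons (by simp)⟩
    · exact ⟨some 0 :: τ, by rw [expand_cons_some, hτl]; rfl, hτ.cons (by simp)⟩
    · have hlt := h.1
      rw [substSeq_eq_appendSeq, hw, block, WordLT, cons_appendSeq_zero,
        shift_cons_appendSeq] at hlt
      obtain ⟨l', rfl⟩ := (hlt.resolve_left (lt_irrefl _)).2.zeros_isPrefix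
      obtain ⟨τ', rfl, hτ'⟩ := exists_isGreedy_of_expand_eq_zeros_append hτl hτ
      match τ', hτ' with
      | none :: τ', hτ' =>
        refine ⟨some 1 :: τ', ?_, hτ'.of_cons.cons (by simp)⟩
        rw [expand_cons_some, block_one_eq, expand_cons_none, block]
        simp
      | [], _ => exact ⟨[some 2], by simp [expand, block], List.isChain_singleton _⟩
      | some b :: τ', hτ' => exact ⟨some 2 :: some b :: τ', rfl, hτ'.cons (by simp)⟩

/-- Comparing a word with the image of `w` block by block compares the parsed word with `w`: the
only block that could exceed its counterpart is `20ⁿ` against `20ⁿ⁺¹`, which greediness excludes. -/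
lemma wordLE_of_wordLT_expand {n : ℕ} {w : Seq3} {x : List (Fin 3)} {τ : List (Option (Fin 3))}
    (hτ : IsGreedy (x.map some ++ τ))
    (h : x ≠ [] → WordLT (expand n (x.map some ++ τ)) (substSeq n w)) : WordLE x w := by
  induction x generalizing w with
  | nil => trivial
  | cons a x ih =>
    specialize h (List.cons_ne_nil _ _)
    rw [List.map_cons, List.cons_append] at h hτ
    rw [expand_cons_some, substSeq_eq_appendSeq] at h
    rcases lt_trichotomy a (w 0) with hlt | heq | hgt
    · exact Or.inl hlt
    · rw [heq, wordLT_append_appendSeq_iff] at h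
      exact Or.inr ⟨heq, ih hτ.of_cons fun _ => h⟩
    exfalso
    rcases fin_three_cases (w 0) with hw | hw | hw
    · rcases fin_three_cases a with rfl | rfl | rfl
      · omega
      all_goals simp [hw, block, WordLT] at h
    · obtain rfl : a = 2 := by omega
      rw [hw, block_one_eq, append_appendSeq, wordLT_append_appendSeq_iff] at h
      obtain ⟨l, hl⟩ := h.zeros_isPrefix (k := 1)
      obtain ⟨τ', hτ', -⟩ := exists_eq_cons_none_of_expand_eq hl.symm
      rw [hτ', IsGreedy, List.isChain_cons_cons] at hτ
      exact hτ.1 rfl rfl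
    · omega

/-- Replace the last digit `2` by `1`. -/
def demoteLastTwo : List (Fin 3) → List (Fin 3)
  | [] => []
  | a :: l => if 2 ∈ l then a :: demoteLastTwo l else 1 :: l

lemma substEquiv_parikh_demoteLastTwo (n : ℕ) {l : List (Fin 3)} (h : 2 ∈ l) :
    substEquiv n (parikh (demoteLastTwo l)) = substEquiv n (parikh l) + stdVec 0 := by
  induction l with
  | nil => simp at h
  | cons a l ih =>
    rw [demoteLastTwo]
    split_ifs with hl
    · rw [parikh_cons, parikh_cons, map_add, map_add, ih hl, add_assoc]
    · obtain rfl : a = 2 := by simpa [hl, eq_comm] using h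
      rw [parikh_cons, parikh_cons, map_add, map_add, substEquiv_stdVec_one, add_right_comm]

lemma WordLE.wordLT_demoteLastTwo {l : List (Fin 3)} {w : Seq3} (h : WordLE l w) (h₂ : 2 ∈ l) :
    WordLT (demoteLastTwo l) w := by
  induction l generalizing w with
  | nil => simp at h₂
  | cons a l ih =>
    rw [demoteLastTwo]
    split_ifs with hl
    · exact h.imp_right (And.imp_right fun h => ih h hl)
    · obtain rfl : a = 2 := by simpa [hl, eq_comm] using h₂
      rcases h with h | ⟨h, -⟩
      · exact Or.inl (lt_trans (by decide) h)
      · exact Or.inl (h ▸ (by decide))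

lemma Admissible.strictAdmissible_demoteLastTwo {w : Seq3} (hw : w 0 = 2) {l : List (Fin 3)}
    (h : Admissible w l) (h₂ : 2 ∈ l) : StrictAdmissible w (demoteLastTwo l) := by
  induction l with
  | nil => trivial
  | cons a l ih =>
    have hlt := h.1.wordLT_demoteLastTwo h₂
    rw [demoteLastTwo] at hlt ⊢
    split_ifs at hlt ⊢ with hl
    · exact ⟨hlt, ih h.2 hl⟩
    · exact ⟨hlt, strictAdmissible_of_two_notMem hw hl⟩

lemma admissible_of_forall_suffix {w : Seq3} {x : List (Fin 3)}
    (h : ∀ q, q <:+ x → WordLE q w) : Admissible w x := by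
  induction x with
  | nil => trivial
  | cons a x ih =>
    exact ⟨h _ List.suffix_rfl, ih fun q hq => h q (hq.trans (List.suffix_cons a x))⟩

section Bounds

variable {n : ℕ} {w : Seq3} {l : List (Fin 3)} (g : (Fin 3 → ℝ) →ₗ[ℝ] ℝ)

lemma map_parikh_nonneg (h : ∀ a ∈ l, 0 ≤ g (stdVec a)) : 0 ≤ g (parikh l) := by
  induction l with
  | nil => simp
  | cons a l ih =>
    rw [parikh_cons, map_add]
    exact add_nonneg (h a List.mem_cons_self) (ih fun b hb => h b (List.mem_cons_of_mem a hb))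

lemma map_substEquiv_parikh_add_nonneg (hw : w 0 = 2) (h₀ : 0 ≤ g (stdVec 0))
    (hg : ∀ t, StrictAdmissible w t → 0 ≤ g (substEquiv n (parikh t)))
    (hl : Admissible w l) :
    0 ≤ g (substEquiv n (parikh l)) + g (stdVec 0) := by
  by_cases h₂ : 2 ∈ l
  · have := hg _ (hl.strictAdmissible_demoteLastTwo hw h₂)
    rwa [substEquiv_parikh_demoteLastTwo n h₂, map_add] at this
  · exact add_nonneg (hg _ (strictAdmissible_of_two_notMem hw h₂)) h₀

/-- Stray zeros cut the tokens into admissible words, and the zero following such a word pays for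
the demotion that makes the word strictly admissible; `x` is the word read so far. -/
lemma map_parikh_expand_add_nonneg (hw : w 0 = 2) (h₀ : 0 ≤ g (stdVec 0))
    (hg : ∀ t, StrictAdmissible w t → 0 ≤ g (substEquiv n (parikh t)))
    (τ : List (Option (Fin 3))) (x : List (Fin 3))
    (hτ : ∀ y : List (Fin 3), y.map some <:+: x.map some ++ τ → WordLE y w) :
    0 ≤ g (substEquiv n (parikh x)) + g (parikh (expand n τ)) + g (stdVec 0) := by
  have hx : Admissible w x := admissible_of_forall_suffix fun q hq =>
    hτ q ((hq.map some).isInfix.trans (List.prefix_append _ _).isInfix)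
  have hword := map_substEquiv_parikh_add_nonneg g hw h₀ hg hx
  induction τ generalizing x with
  | nil => simpa [expand] using hword
  | cons o τ ih =>
    cases o with
    | none =>
      have hrest := ih [] (fun y hy => hτ y (hy.trans
        ((List.suffix_cons none τ).trans (List.suffix_append _ _)).isInfix)) trivial
        (by simpa using h₀)
      rw [parikh_nil, map_zero, map_zero, zero_add] at hrest
      rw [expand_cons_none, parikh_cons, map_add]
      linarith
    | some a =>
      have hτ' (y : List (Fin 3)) (hy : y.map some <:+: (x ++ [a]).map some ++ τ) : WordLE y w :=
        hτ y (by simpa using hy)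
      have hxa : Admissible w (x ++ [a]) := admissible_of_forall_suffix fun q hq =>
        hτ' q ((hq.map some).isInfix.trans (List.prefix_append _ _).isInfix)
      have hrest := ih (x ++ [a]) hτ' hxa (map_substEquiv_parikh_add_nonneg g hw h₀ hg hxa)
      rw [parikh_append, parikh_cons, parikh_nil, add_zero, map_add, map_add] at hrest
      rw [expand_cons_some, parikh_append, map_add, parikh_block]
      linarith

lemma StrictAdmissible.map_parikh_add_nonneg (hw : w 0 = 2) (h₀ : 0 ≤ g (stdVec 0))
    (hg : ∀ t, StrictAdmissible w t → 0 ≤ g (substEquiv n (parikh t)))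
    (hl : StrictAdmissible (substSeq n w) l) :
    0 ≤ g (parikh l) + g (stdVec 0) := by
  obtain ⟨τ, rfl, hτ⟩ := hl.exists_isGreedy hw
  have := map_parikh_expand_add_nonneg g hw h₀ hg τ [] ?_
  · simpa using this
  rintro y ⟨ρ, r, hy⟩
  rw [List.map_nil, List.nil_append, List.append_assoc] at hy
  subst hy
  refine wordLE_of_wordLT_expand (n := n) (τ := r) hτ.right_of_append fun hy => ?_
  rw [expand_append] at hl
  refine hl.right_of_append.wordLT ?_
  obtain ⟨a, y, rfl⟩ := List.exists_cons_of_ne_nil hy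
  rw [List.map_cons, List.cons_append, expand_cons_some]
  exact List.append_ne_nil_of_left_ne_nil (List.ne_nil_of_length_pos (length_block_pos n a)) _

/-- The additive error in `StrictAdmissible.map_parikh_add_nonneg` disappears because strictly
admissible words can be repeated. -/
lemma StrictAdmissible.map_parikh_nonneg_of_substSeq (hw : w 0 = 2) (h₀ : 0 ≤ g (stdVec 0))
    (hg : ∀ t, StrictAdmissible w t → 0 ≤ g (substEquiv n (parikh t)))
    (hl : StrictAdmissible (substSeq n w) l) :
    0 ≤ g (parikh l) := by
  by_contra! hneg
  obtain ⟨k, hk⟩ := exists_nat_gt (g (stdVec 0) / -g (parikh l))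
  have hrep : StrictAdmissible (substSeq n w) (List.replicate k l).flatten :=
    StrictAdmissible.flatten fun x hx => List.eq_of_mem_replicate hx ▸ hl
  have := hrep.map_parikh_add_nonneg g hw h₀ hg
  rw [parikh_flatten_replicate, map_smul, smul_eq_mul] at this
  rw [div_lt_iff₀ (by linarith)] at hk
  linarith

end Bounds

lemma StrictAdmissible.map_parikh_nonneg_of_upperSeq {u : List ℕ} (g : (Fin 3 → ℝ) →ₗ[ℝ] ℝ)
    (h₀ : ∀ i ≤ u.length, 0 ≤ g (substEquivs (u.take i) (stdVec 0)))
    (h₁ : 0 ≤ g (substEquivs u (stdVec 1))) (h₂ : 0 ≤ g (substEquivs u (stdVec 2)))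
    {l : List (Fin 3)} (hl : StrictAdmissible (upperSeq u) l) : 0 ≤ g (parikh l) := by
  induction u generalizing g l with
  | nil =>
    refine map_parikh_nonneg g fun a _ => ?_
    rcases fin_three_cases a with rfl | rfl | rfl
    exacts [h₀ 0 le_rfl, h₁, h₂]
  | cons n u ih =>
    refine hl.map_parikh_nonneg_of_substSeq g (upperSeq_apply_zero u) (h₀ 0 (Nat.zero_le _))
      fun t ht => ?_
    exact ih (g ∘ₗ (substEquiv n).toLinearMap) (fun i hi => h₀ (i + 1) (Nat.succ_le_succ hi))
      h₁ h₂ ht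

lemma not_wordLT_zero (l : List (Fin 3)) : ¬ WordLT l 0 := by
  induction l with
  | nil => exact id
  | cons a l ih => exact fun h => h.elim (Fin.not_lt_zero _) fun h => ih h.2

lemma two_notMem_of_strictAdmissible_twoZeros {l : List (Fin 3)}
    (h : StrictAdmissible twoZeros l) : 2 ∉ l := by
  induction l with
  | nil => exact List.not_mem_nil
  | cons a l ih =>
    rw [List.mem_cons, not_or]
    refine ⟨?_, ih h.2⟩
    rintro rfl
    rcases h.1 with h | h
    · exact lt_irrefl _ h
    · exact not_wordLT_zero l h.2

lemma StrictAdmissible.map_parikh_nonneg_of_lowerSeq {u : List ℕ} (g : (Fin 3 → ℝ) →ₗ[ℝ] ℝ)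
    (h₀ : ∀ i ≤ u.length, 0 ≤ g (substEquivs (u.take i) (stdVec 0)))
    (h₁ : 0 ≤ g (substEquivs u (stdVec 1)))
    {l : List (Fin 3)} (hl : StrictAdmissible (lowerSeq u) l) : 0 ≤ g (parikh l) := by
  induction u generalizing g l with
  | nil =>
    refine map_parikh_nonneg g fun a ha => ?_
    rcases fin_three_cases a with rfl | rfl | rfl
    exacts [h₀ 0 le_rfl, h₁, absurd ha (two_notMem_of_strictAdmissible_twoZeros hl)]
  | cons n u ih =>
    refine hl.map_parikh_nonneg_of_substSeq g (lowerSeq_apply_zero u) (h₀ 0 (Nat.zero_le _))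
      fun t ht => ?_
    exact ih (g ∘ₗ (substEquiv n).toLinearMap) (fun i hi => h₀ (i + 1) (Nat.succ_le_succ hi))
      h₁ ht

/-! ### Corner points -/

lemma substEquiv_nonneg (n : ℕ) {x : Fin 3 → ℝ} (hx : 0 ≤ x) : 0 ≤ substEquiv n x := by
  have hx₀ : 0 ≤ x 0 := hx 0
  have hx₁ : 0 ≤ x 1 := hx 1
  have hx₂ : 0 ≤ x 2 := hx 2
  intro i
  fin_cases i
  · exact add_nonneg (mul_nonneg (by positivity) hx₁) (mul_nonneg n.cast_nonneg hx₂)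
  · exact hx₀
  · exact add_nonneg hx₁ hx₂

lemma coordSum_le_coordSum_substEquiv (n : ℕ) {x : Fin 3 → ℝ} (hx : 0 ≤ x) :
    coordSum x ≤ coordSum (substEquiv n x) := by
  have hx₁ : 0 ≤ x 1 := hx 1
  have hx₂ : 0 ≤ x 2 := hx 2
  have hn : 0 ≤ (n : ℝ) * x 1 + n * x 2 := by positivity
  simp only [coordSum_apply, substEquiv_apply, Matrix.cons_val]
  linarith

lemma substEquivs_nonneg (u : List ℕ) {x : Fin 3 → ℝ} (hx : 0 ≤ x) : 0 ≤ substEquivs u x := by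
  induction u with
  | nil => exact hx
  | cons n u ih => exact substEquiv_nonneg n ih

lemma coordSum_le_coordSum_substEquivs (u : List ℕ) {x : Fin 3 → ℝ} (hx : 0 ≤ x) :
    coordSum x ≤ coordSum (substEquivs u x) := by
  induction u with
  | nil => exact le_rfl
  | cons n u ih => exact ih.trans (coordSum_le_coordSum_substEquiv n (substEquivs_nonneg u hx))

lemma one_le_coordSum_substEquivs_stdVec (u : List ℕ) (a : Fin 3) :
    1 ≤ coordSum (substEquivs u (stdVec a)) :=
  (coordSum_stdVec a).symm.trans_le (coordSum_le_coordSum_substEquivs u (stdVec_nonneg a))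

lemma coordSum_substEquivs_stdVec_pos (u : List ℕ) (a : Fin 3) :
    0 < coordSum (substEquivs u (stdVec a)) :=
  one_pos.trans_le (one_le_coordSum_substEquivs_stdVec u a)

/-- The radial projection to the plane `coordSum x = 1` (with value `0` where `coordSum x = 0`). -/
noncomputable def planeProj (x : Fin 3 → ℝ) : Fin 3 → ℝ := (coordSum x)⁻¹ • x

lemma coordSum_planeProj {x : Fin 3 → ℝ} (hx : coordSum x ≠ 0) : coordSum (planeProj x) = 1 := by
  rw [planeProj, map_smul, smul_eq_mul, inv_mul_cancel₀ hx]

lemma coordSum_smul_planeProj {x : Fin 3 → ℝ} (hx : coordSum x ≠ 0) :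
    coordSum x • planeProj x = x := smul_inv_smul₀ hx x

lemma planeProj_smul {c : ℝ} (hc : c ≠ 0) (x : Fin 3 → ℝ) : planeProj (c • x) = planeProj x := by
  rw [planeProj, planeProj, map_smul, smul_eq_mul, mul_inv_rev, mul_smul, inv_smul_smul₀ hc]

lemma continuousAt_planeProj {x : Fin 3 → ℝ} (hx : coordSum x ≠ 0) : ContinuousAt planeProj x :=
  (coordSum.continuous_of_finiteDimensional.continuousAt.inv₀ hx).smul continuousAt_id

lemma wordFreq_eq_planeProj (l : List (Fin 3)) : wordFreq l = planeProj (parikh l) := by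
  rw [wordFreq, planeProj, coordSum_parikh]

lemma tendsto_planeProj_add_inv_smul {x : Fin 3 → ℝ} (hx : coordSum x ≠ 0) (y : Fin 3 → ℝ) :
    Tendsto (fun k : ℕ => planeProj (x + ((k : ℝ) + 1)⁻¹ • y)) atTop (𝓝 (planeProj x)) := by
  refine (continuousAt_planeProj hx).tendsto.comp ?_
  have h := (tendsto_one_div_add_atTop_nhds_zero_nat (𝕜 := ℝ)).smul_const y
  simpa using tendsto_const_nhds.add h

/-- The vertices of the triangle coded by `u`: the frequencies of the images of the digits. -/
noncomputable def corner (u : List ℕ) (a : Fin 3) : Fin 3 → ℝ :=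
  planeProj (substEquivs u (stdVec a))

lemma corner_eq_wordFreq (u : List ℕ) (a : Fin 3) : corner u a = wordFreq (substWords u [a]) := by
  rw [wordFreq_eq_planeProj, parikh_substWords, parikh_cons, parikh_nil, add_zero, corner]

lemma map_corner (g : (Fin 3 → ℝ) →ₗ[ℝ] ℝ) (u : List ℕ) (a : Fin 3) :
    g (corner u a) = (coordSum (substEquivs u (stdVec a)))⁻¹ * g (substEquivs u (stdVec a)) := by
  rw [corner, planeProj, map_smul, smul_eq_mul]

lemma substWords_ne_nil (u : List ℕ) {l : List (Fin 3)} (hl : l ≠ []) : substWords u l ≠ [] := by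
  induction u with
  | nil => exact hl
  | cons n u ih =>
    rw [← List.length_pos_iff] at ih ⊢
    exact ih.trans_le (length_le_length_substWord n _)

lemma corner_mem_DF_substSeqs (u : List ℕ) {w : Seq3} (hw : w 0 = 2) {a : Fin 3} (ha : a ≠ 2) :
    corner u a ∈ DF (substSeqs u w) := by
  rw [corner_eq_wordFreq]
  have h : StrictAdmissible w [a] := strictAdmissible_of_two_notMem hw (by simpa using ha.symm)
  exact (h.substWords u hw).wordFreq_mem_DF (substWords_ne_nil u (List.cons_ne_nil _ _))

lemma corner_zero_mem_DF_lowerSeq (u v : List ℕ) : corner u 0 ∈ DF (lowerSeq (u ++ v)) := by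
  rw [lowerSeq, substSeqs_append]
  exact corner_mem_DF_substSeqs u (lowerSeq_apply_zero v) (by decide)

lemma corner_one_mem_DF_lowerSeq (u : List ℕ) : corner u 1 ∈ DF (lowerSeq u) :=
  corner_mem_DF_substSeqs u rfl (by decide)

lemma strictAdmissible_allTwos (k : ℕ) : StrictAdmissible allTwos (List.replicate k 2 ++ [1]) := by
  have hlt (k : ℕ) : WordLT (List.replicate k 2 ++ [1]) allTwos := by
    induction k with
    | zero => exact Or.inl (by decide)
    | succ k ih => exact Or.inr ⟨rfl, ih⟩
  induction k with
  | zero => exact ⟨hlt 0, trivial⟩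
  | succ k ih => exact ⟨hlt (k + 1), ih⟩

/-- The word `2` is not strictly admissible, but `2ᵏ1` is, and its frequency tends to the corner. -/
lemma corner_two_mem_DF_upperSeq (u : List ℕ) : corner u 2 ∈ DF (upperSeq u) := by
  refine (isCompact_DF (upperSeq_apply_zero u)).isClosed.mem_of_tendsto
    (tendsto_planeProj_add_inv_smul (coordSum_substEquivs_stdVec_pos u 2).ne'
      (substEquivs u (stdVec 1))) (Eventually.of_forall fun k => ?_)
  have hk : (k : ℝ) + 1 ≠ 0 := by positivity
  have hmem := ((strictAdmissible_allTwos (k + 1)).substWords u rfl).wordFreq_mem_DF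
    (substWords_ne_nil u (by simp))
  have hparikh : parikh (List.replicate (k + 1) 2 ++ [1]) =
      ((k : ℝ) + 1) • (stdVec 2 + ((k : ℝ) + 1)⁻¹ • stdVec 1) := by
    simp [smul_inv_smul₀ hk]
  rwa [wordFreq_eq_planeProj, parikh_substWords, hparikh, map_smul, planeProj_smul hk, map_add,
    map_smul] at hmem

/-! ### Separating functionals -/

/-- The coordinate of the corner `2` in the triangle coded by `u`. It is nonpositive on
`DF (lowerSeq u)`, and its zero line contains the opposite side of the triangle. -/
def sepFunctional (u : List ℕ) : (Fin 3 → ℝ) →ₗ[ℝ] ℝ :=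
  LinearMap.proj 2 ∘ₗ (substEquivs u).symm.toLinearMap

lemma sepFunctional_apply (u : List ℕ) (x : Fin 3 → ℝ) :
    sepFunctional u x = (substEquivs u).symm x 2 := rfl

lemma sepFunctional_substEquivs (u : List ℕ) (x : Fin 3 → ℝ) :
    sepFunctional u (substEquivs u x) = x 2 := by
  rw [sepFunctional_apply, LinearEquiv.symm_apply_apply]

lemma substEquivs_append_symm (u v : List ℕ) (x : Fin 3 → ℝ) :
    (substEquivs (u ++ v)).symm x = (substEquivs v).symm ((substEquivs u).symm x) := by
  rw [LinearEquiv.symm_apply_eq, substEquivs_append, LinearEquiv.apply_symm_apply,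
    LinearEquiv.apply_symm_apply]

lemma sepFunctional_append_substEquivs (u v : List ℕ) (x : Fin 3 → ℝ) :
    sepFunctional (u ++ v) (substEquivs u x) = sepFunctional v x := by
  rw [sepFunctional_apply, substEquivs_append_symm, LinearEquiv.symm_apply_apply,
    sepFunctional_apply]

lemma sepFunctional_nonpos (u : List ℕ) {x : Fin 3 → ℝ} (h₀ : 0 ≤ x 0) (h₁ : 0 ≤ x 1)
    (h₂ : x 2 ≤ 0) : sepFunctional u x ≤ 0 := by
  induction u generalizing x with
  | nil => exact h₂
  | cons n _ ih =>
    have hn : (n : ℝ) * x 2 ≤ 0 := mul_nonpos_of_nonneg_of_nonpos (by positivity) h₂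
    refine ih (x := (substEquiv n).symm x) h₁ ?_ ?_ <;>
      simp only [substEquiv_symm_apply, Matrix.cons_val] <;> linarith

lemma sepFunctional_append_substEquivs_stdVec_zero_nonpos (u v : List ℕ) :
    sepFunctional (u ++ v) (substEquivs u (stdVec 0)) ≤ 0 := by
  rw [sepFunctional_append_substEquivs]
  exact sepFunctional_nonpos v (by simp) (by simp) (by simp)

lemma sepFunctional_nonpos_of_mem_DF_lowerSeq (u : List ℕ) {x : Fin 3 → ℝ}
    (hx : x ∈ DF (lowerSeq u)) : sepFunctional u x ≤ 0 := by
  have hneg (l : List (Fin 3)) (hl : StrictAdmissible (lowerSeq u) l) :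
      0 ≤ (-sepFunctional u) (parikh l) := by
    refine hl.map_parikh_nonneg_of_lowerSeq _ (fun i _ => ?_) ?_
    · have := sepFunctional_append_substEquivs_stdVec_zero_nonpos (u.take i) (u.drop i)
      rw [List.take_append_drop] at this
      simpa using this
    · simp [sepFunctional_substEquivs]
  simpa using nonneg_of_mem_DF (lowerSeq_apply_zero u) (-sepFunctional u) hneg hx

lemma exists_int_substEquivs_symm (u : List ℕ) (j : Fin 3) :
    ∃ m : Fin 3 → ℤ, ∀ x, (substEquivs u).symm x j = ∑ i, (m i : ℝ) * x i := by
  induction u generalizing j with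
  | nil => exact ⟨Pi.single j 1, fun x => by simp [substEquivs, Pi.single_apply]⟩
  | cons n u ih =>
    obtain ⟨m, hm⟩ := ih j
    refine ⟨![m 1 - m 2, m 0, (n + 1) * m 2 - n * m 1], fun x => ?_⟩
    change (substEquivs u).symm ((substEquiv n).symm x) j = _
    rw [hm]
    simp [Fin.sum_univ_three, substEquiv_symm_apply]
    ring

lemma exists_int_sepFunctional (u : List ℕ) :
    ∃ m : Fin 3 → ℤ, m ≠ 0 ∧ ∀ x, sepFunctional u x = ∑ i, (m i : ℝ) * x i := by
  obtain ⟨m, hm⟩ := exists_int_substEquivs_symm u 2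
  refine ⟨m, ?_, hm⟩
  rintro rfl
  have hone := sepFunctional_substEquivs u (stdVec 2)
  rw [sepFunctional_apply, hm] at hone
  simp at hone

/-! ### Triangles -/

/-- The triangle coded by `u`, the convex hull of the three points `corner u a`. -/
def triangle (u : List ℕ) : Set (Fin 3 → ℝ) := {x | coordSum x = 1 ∧ 0 ≤ (substEquivs u).symm x}

lemma isClosed_triangle (u : List ℕ) : IsClosed (triangle u) :=
  (isClosed_eq coordSum.continuous_of_finiteDimensional continuous_const).inter
    (isClosed_le continuous_const
      (substEquivs u).symm.toLinearMap.continuous_of_finiteDimensional)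

lemma triangle_append_subset (u v : List ℕ) : triangle (u ++ v) ⊆ triangle u := by
  rintro x ⟨hsum, hx⟩
  refine ⟨hsum, ?_⟩
  rw [substEquivs_append_symm] at hx
  simpa using substEquivs_nonneg v hx

lemma corner_mem_triangle (u : List ℕ) (a : Fin 3) : corner u a ∈ triangle u := by
  have hpos := coordSum_substEquivs_stdVec_pos u a
  refine ⟨coordSum_planeProj hpos.ne', ?_⟩
  rw [corner, planeProj, map_smul, LinearEquiv.symm_apply_apply]
  exact smul_nonneg (inv_nonneg.2 hpos.le) (stdVec_nonneg a)

lemma substEquivs_zeros (j : ℕ) (y : Fin 3 → ℝ) :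
    substEquivs (List.replicate (2 * j) 0) y = ![y 0, y 1, j * (y 0 + y 1) + y 2] := by
  induction j with
  | zero => ext i; fin_cases i <;> simp [substEquivs]
  | succ j ih =>
    rw [Nat.mul_succ, List.replicate_succ, List.replicate_succ, substEquivs_cons, substEquivs_cons,
      ih]
    ext i
    fin_cases i <;> simp [substEquiv_apply]
    ring

lemma nonneg_of_mem_triangle {u : List ℕ} {x : Fin 3 → ℝ} (hx : x ∈ triangle u) : 0 ≤ x := by
  simpa using substEquivs_nonneg u hx.2

lemma isCompact_triangle (u : List ℕ) : IsCompact (triangle u) := by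
  refine (isCompact_Icc (a := (0 : Fin 3 → ℝ)) (b := 1)).of_isClosed_subset (isClosed_triangle u)
    fun x hx => ⟨nonneg_of_mem_triangle hx, fun i => ?_⟩
  rw [Pi.one_apply, ← hx.1]
  exact Finset.single_le_sum (fun j _ => nonneg_of_mem_triangle hx j) (Finset.mem_univ i)

lemma eq_planeProj_of_smul_eq {c : ℝ} {x y : Fin 3 → ℝ} (hx : coordSum x = 1) (hxy : x = c • y) :
    x = planeProj y := by
  have hc : c ≠ 0 := by
    rintro rfl
    simp [hxy] at hx
  rw [← planeProj_smul hc, ← hxy, planeProj, hx, inv_one, one_smul]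

lemma eq_corner_two_of_mem_iInter {u : List ℕ} {x : Fin 3 → ℝ}
    (hx : x ∈ ⋂ j : ℕ, triangle (u ++ List.replicate (2 * j) 0)) : x = corner u 2 := by
  rw [Set.mem_iInter] at hx
  have hxu : x ∈ triangle u := triangle_append_subset u _ (hx 0)
  set y := (substEquivs u).symm x with hy
  have hbound (j : ℕ) : j * (y 0 + y 1) ≤ y 2 := by
    have hnonneg := (hx j).2 2
    set z := (substEquivs (u ++ List.replicate (2 * j) 0)).symm x with hz
    have hyz : y = ![z 0, z 1, j * (z 0 + z 1) + z 2] := by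
      rw [← substEquivs_zeros, hz, substEquivs_append_symm, LinearEquiv.apply_symm_apply]
    rw [hyz]
    simpa using hnonneg
  have hy₀ : 0 ≤ y 0 := hxu.2 0
  have hy₁ : 0 ≤ y 1 := hxu.2 1
  have hsum : y 0 + y 1 ≤ 0 := by
    by_contra! hpos
    obtain ⟨j, hj⟩ := exists_nat_gt (y 2 / (y 0 + y 1))
    exact (hbound j).not_gt ((div_lt_iff₀ hpos).1 hj)
  have hy₂ : y = y 2 • stdVec 2 := by
    ext i
    fin_cases i
    · simp; linarith
    · simp; linarith
    · simp
  refine eq_planeProj_of_smul_eq (c := y 2) hxu.1 ?_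
  rw [← map_smul, ← hy₂, hy, LinearEquiv.apply_symm_apply]

lemma exists_triangle_append_subset {u : List ℕ} {O : Set (Fin 3 → ℝ)}
    (hO : O ∈ 𝓝 (corner u 2)) : ∃ v, triangle (u ++ v) ⊆ O := by
  have hanti : Antitone fun j : ℕ => triangle (u ++ List.replicate (2 * j) 0) :=
    antitone_nat_of_succ_le fun j => by
      rw [Nat.mul_succ, List.replicate_add, ← List.append_assoc]
      exact triangle_append_subset _ _
  obtain ⟨j, hj⟩ := exists_subset_nhds_of_isCompact' hanti.directed_ge
    (fun _ => isCompact_triangle _) (fun _ => isClosed_triangle _)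
    (fun x hx => eq_corner_two_of_mem_iInter hx ▸ hO)
  exact ⟨_, hj⟩

/-! ### Extendable properties of codes -/

/-- A property of finite codes that every code can be extended to satisfy. Such a property gives a
dense open set of digit frequency sets. -/
def Extendable (P : List ℕ → Prop) : Prop := ∀ u, ∃ v, P (u ++ v)

lemma extendable_le_length (k : ℕ) : Extendable fun u => k ≤ u.length :=
  fun u => ⟨List.replicate k 0, by simp⟩

lemma extendable_dist_triangle_le {ε : ℝ} (hε : 0 < ε) :
    Extendable fun u => ∀ x ∈ triangle u, ∀ y ∈ triangle u, dist x y ≤ ε := fun u => by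
  obtain ⟨v, hv⟩ := exists_triangle_append_subset (Metric.ball_mem_nhds (corner u 2) (half_pos hε))
  refine ⟨v, fun x hx y hy => ?_⟩
  calc dist x y ≤ dist x (corner u 2) + dist y (corner u 2) := dist_triangle_right _ _ _
    _ ≤ ε / 2 + ε / 2 := add_le_add (hv hx).le (hv hy).le
    _ = ε := add_halves ε

lemma exists_map_substEquivs_stdVec_two_ne_zero {g : (Fin 3 → ℝ) →ₗ[ℝ] ℝ} (hg : g ≠ 0) :
    ∃ v, g (substEquivs v (stdVec 2)) ≠ 0 := by
  by_contra! hzero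
  have hvec₁ : substEquivs [1] (stdVec 2) = stdVec 0 + stdVec 2 := by
    ext i; fin_cases i <;> simp [substEquivs, substEquiv_apply]
  have hvec₂ : substEquivs [1, 1] (stdVec 2) = stdVec 0 + stdVec 1 + stdVec 2 := by
    ext i; fin_cases i <;> simp [substEquivs, substEquiv_apply]
  have h₂ : g (stdVec 2) = 0 := hzero []
  have h₀ : g (stdVec 0) = 0 := by simpa [hvec₁, h₂] using hzero [1]
  have h₁ : g (stdVec 1) = 0 := by simpa [hvec₂, h₀, h₂] using hzero [1, 1]
  refine hg (LinearMap.pi_ext' fun a => LinearMap.ext_ring ?_)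
  fin_cases a
  exacts [h₀, h₁, h₂]

lemma extendable_map_ne_zero {g : (Fin 3 → ℝ) →ₗ[ℝ] ℝ} (hg : g ≠ 0) :
    Extendable fun u => ∀ x ∈ triangle u, g x ≠ 0 := fun u => by
  have hgu : g ∘ₗ (substEquivs u).toLinearMap ≠ 0 := fun h =>
    hg (LinearMap.ext fun x => by simpa using LinearMap.congr_fun h ((substEquivs u).symm x))
  obtain ⟨v, hv⟩ := exists_map_substEquivs_stdVec_two_ne_zero hgu
  have hcorner : g (corner (u ++ v) 2) ≠ 0 := by
    rw [map_corner]
    refine mul_ne_zero (inv_ne_zero (coordSum_substEquivs_stdVec_pos (u ++ v) 2).ne') ?_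
    rwa [substEquivs_append]
  obtain ⟨v', hv'⟩ := exists_triangle_append_subset
    (g.continuous_of_finiteDimensional.continuousAt.eventually_ne hcorner)
  refine ⟨v ++ v', fun x hx => hv' ?_⟩
  rwa [List.append_assoc]

open NormedSpace in
lemma normalize_sub_add_normalize_sub_eq_zero {E : Type*} [NormedAddCommGroup E] [NormedSpace ℝ E]
    {a b x : E} (hx : x ∈ openSegment ℝ a b) : normalize (a - x) + normalize (b - x) = 0 := by
  obtain ⟨s, t, hs, ht, hst, rfl⟩ := hx
  have ha : a - (s • a + t • b) = t • (a - b) := by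
    rw [eq_sub_of_add_eq hst]; module
  have hb : b - (s • a + t • b) = s • -(a - b) := by
    rw [eq_sub_of_add_eq' hst]; module
  rw [ha, hb, normalize_smul_of_pos ht, normalize_smul_of_pos hs, normalize_neg, add_neg_cancel]

open NormedSpace in
lemma continuousAt_normalize {E : Type*} [NormedAddCommGroup E] [NormedSpace ℝ E] {x : E}
    (hx : x ≠ 0) : ContinuousAt (normalize : E → E) x :=
  (continuousAt_id.norm.inv₀ (norm_ne_zero_iff.2 hx)).smul continuousAt_id

lemma planeProj_add_mem_openSegment {x y : Fin 3 → ℝ} (hx : 0 < coordSum x) (hy : 0 < coordSum y) :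
    planeProj (x + y) ∈ openSegment ℝ (planeProj x) (planeProj y) := by
  have hxy : 0 < coordSum x + coordSum y := add_pos hx hy
  refine ⟨_, _, div_pos hx hxy, div_pos hy hxy, by rw [← add_div, div_self hxy.ne'], ?_⟩
  rw [div_eq_inv_mul, div_eq_inv_mul, mul_smul, mul_smul, coordSum_smul_planeProj hx.ne',
    coordSum_smul_planeProj hy.ne', ← smul_add, planeProj, map_add]

lemma corner_zero_ne_corner_one (u : List ℕ) : corner u 0 ≠ corner u 1 := fun h => by
  have hne := (coordSum_substEquivs_stdVec_pos u 0).ne'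
  have hcoord := congrArg (fun x => (substEquivs u).symm x 0) h
  exact hne (by simpa [corner, planeProj] using hcoord)

lemma substEquivs_pair_stdVec_two (n : ℕ) :
    substEquivs [n + 1, n + 1] (stdVec 2) =
      ((n : ℝ) + 1) • (stdVec 0 + stdVec 1 + ((n : ℝ) + 1)⁻¹ • stdVec 2) := by
  have hn : (n : ℝ) + 1 ≠ 0 := by positivity
  ext i
  fin_cases i <;> simp [substEquivs, substEquiv_apply, hn]

lemma tendsto_corner_two_append_pair (u : List ℕ) :
    Tendsto (fun n : ℕ => corner (u ++ [n + 1, n + 1]) 2) atTop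
      (𝓝 (planeProj (substEquivs u (stdVec 0) + substEquivs u (stdVec 1)))) := by
  have hsum : coordSum (substEquivs u (stdVec 0) + substEquivs u (stdVec 1)) ≠ 0 := by
    rw [map_add]
    exact (add_pos (coordSum_substEquivs_stdVec_pos u 0) (coordSum_substEquivs_stdVec_pos u 1)).ne'
  refine (tendsto_planeProj_add_inv_smul hsum (substEquivs u (stdVec 2))).congr fun n => ?_
  have hn : (n : ℝ) + 1 ≠ 0 := by positivity
  rw [corner, substEquivs_append, substEquivs_pair_stdVec_two, map_smul, planeProj_smul hn, map_add,
    map_add, map_smul]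

open NormedSpace in
/-- The triangles coded by `u ++ [n + 1, n + 1]` approach an interior point of the side of
`triangle u` opposite to `corner u 2`, from which the other two corners are in opposite
directions. -/
lemma extendable_norm_normalize_add_le {ε : ℝ} (hε : 0 < ε) :
    Extendable fun u => ∃ u₁, u₁ <+: u ∧ ∀ x ∈ triangle u,
      ‖normalize (corner u₁ 0 - x) + normalize (corner u₁ 1 - x)‖ ≤ ε := fun u => by
  set z := planeProj (substEquivs u (stdVec 0) + substEquivs u (stdVec 1))
  have hz : z ∈ openSegment ℝ (corner u 0) (corner u 1) :=
    planeProj_add_mem_openSegment (coordSum_substEquivs_stdVec_pos u 0)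
      (coordSum_substEquivs_stdVec_pos u 1)
  have hne₀ : corner u 0 - z ≠ 0 := fun h => by
    rw [← sub_eq_zero.1 h, left_mem_openSegment_iff] at hz
    exact corner_zero_ne_corner_one u hz
  have hne₁ : corner u 1 - z ≠ 0 := fun h => by
    rw [← sub_eq_zero.1 h, right_mem_openSegment_iff] at hz
    exact corner_zero_ne_corner_one u hz
  have hcont : ContinuousAt
      (fun x => ‖normalize (corner u 0 - x) + normalize (corner u 1 - x)‖) z :=
    (((continuousAt_normalize hne₀).comp (continuousAt_const.sub continuousAt_id)).add
      ((continuousAt_normalize hne₁).comp (continuousAt_const.sub continuousAt_id))).norm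
  have hnhds : ∀ᶠ x in 𝓝 z, ‖normalize (corner u 0 - x) + normalize (corner u 1 - x)‖ < ε :=
    hcont.eventually_lt continuousAt_const
      (by rwa [normalize_sub_add_normalize_sub_eq_zero hz, norm_zero])
  obtain ⟨n, hn⟩ :=
    ((tendsto_corner_two_append_pair u).eventually hnhds.eventually_nhds).exists
  obtain ⟨v, hv⟩ := exists_triangle_append_subset hn
  refine ⟨[n + 1, n + 1] ++ v, u, List.prefix_append _ _, fun x hx => ?_⟩
  rw [← List.append_assoc] at hx
  exact (hv hx).le

/-! ### Coding intervals -/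

lemma map_corner_nonneg_iff {g : (Fin 3 → ℝ) →ₗ[ℝ] ℝ} {u : List ℕ} {a : Fin 3} :
    0 ≤ g (corner u a) ↔ 0 ≤ g (substEquivs u (stdVec a)) := by
  rw [map_corner]
  exact mul_nonneg_iff_of_pos_left (inv_pos.2 (coordSum_substEquivs_stdVec_pos u a))

lemma nonneg_of_mem_DF_upperSeq {u : List ℕ} (g : (Fin 3 → ℝ) →ₗ[ℝ] ℝ)
    (h₀ : ∀ i ≤ u.length, 0 ≤ g (corner (u.take i) 0)) (h₁ : 0 ≤ g (corner u 1))
    (h₂ : 0 ≤ g (corner u 2)) {x : Fin 3 → ℝ} (hx : x ∈ DF (upperSeq u)) : 0 ≤ g x := by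
  simp only [map_corner_nonneg_iff] at h₀ h₁ h₂
  exact nonneg_of_mem_DF (upperSeq_apply_zero u) g
    (fun _ hl => hl.map_parikh_nonneg_of_upperSeq g h₀ h₁ h₂) hx

lemma nonneg_of_mem_DF_lowerSeq {u : List ℕ} (g : (Fin 3 → ℝ) →ₗ[ℝ] ℝ)
    (h₀ : ∀ i ≤ u.length, 0 ≤ g (corner (u.take i) 0)) (h₁ : 0 ≤ g (corner u 1))
    {x : Fin 3 → ℝ} (hx : x ∈ DF (lowerSeq u)) : 0 ≤ g x := by
  simp only [map_corner_nonneg_iff] at h₀ h₁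
  exact nonneg_of_mem_DF (lowerSeq_apply_zero u) g
    (fun _ hl => hl.map_parikh_nonneg_of_lowerSeq g h₀ h₁) hx

lemma corner_append_singleton_zero (u : List ℕ) (n : ℕ) : corner (u ++ [n]) 0 = corner u 1 := by
  rw [corner, corner, substEquivs_append]
  congr 2
  ext i
  fin_cases i <;> simp [substEquivs, substEquiv_apply]

lemma corner_append_singleton_succ_two (u : List ℕ) (n : ℕ) :
    corner (u ++ [n + 1]) 2 = corner (u ++ [n]) 1 := by
  rw [corner, corner, substEquivs_append, substEquivs_append]
  congr 2
  ext i
  fin_cases i <;> simp [substEquivs, substEquiv_apply]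

lemma exists_map_neg_and_forall_map_pos {D : Set (Fin 3 → ℝ)} (hclosed : IsClosed D)
    (hconvex : Convex ℝ D) (hD : ∀ y ∈ D, coordSum y = 1) {x : Fin 3 → ℝ} (hx : coordSum x = 1)
    (hxD : x ∉ D) : ∃ g : (Fin 3 → ℝ) →ₗ[ℝ] ℝ, g x < 0 ∧ ∀ y ∈ D, 0 < g y := by
  obtain ⟨f, s, hfx, hfD⟩ := geometric_hahn_banach_point_closed hconvex hclosed hxD
  refine ⟨(f : (Fin 3 → ℝ) →ₗ[ℝ] ℝ) - s • coordSum, ?_, fun y hy => ?_⟩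
  · simpa [hx] using hfx
  · simpa [hD y hy] using hfD y hy

lemma lowerSeq_lexLe_upperSeq (u : List ℕ) : lexLe (lowerSeq u) (upperSeq u) :=
  lexLe_substSeqs u (lexLe_allTwos _)

/-- `DF` is constant on the gap between `upperSeq (u ++ [n + 1])` and `lowerSeq (u ++ [n])`. -/
lemma DF_lowerSeq_subset_DF_upperSeq_succ (u : List ℕ) (n : ℕ) :
    DF (lowerSeq (u ++ [n])) ⊆ DF (upperSeq (u ++ [n + 1])) := by
  intro x hx
  by_contra hxD
  have hup := upperSeq_apply_zero (u ++ [n + 1])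
  obtain ⟨g, hgx, hg⟩ := exists_map_neg_and_forall_map_pos (isCompact_DF hup).isClosed
    (convex_DF hup) (fun y hy => coordSum_eq_one_of_mem_DF hup hy)
    (coordSum_eq_one_of_mem_DF (lowerSeq_apply_zero _) hx) hxD
  have hg₀ (i : ℕ) : 0 ≤ g (corner ((u ++ [n + 1]).take i) 0) := by
    have hmem := corner_zero_mem_DF_lowerSeq ((u ++ [n + 1]).take i) ((u ++ [n + 1]).drop i)
    rw [List.take_append_drop] at hmem
    exact (hg _ (DF_mono (lowerSeq_lexLe_upperSeq _) hmem)).le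
  refine hgx.not_ge (nonneg_of_mem_DF_lowerSeq g (fun i hi => ?_) ?_ hx)
  · rcases hi.lt_or_eq with hlt | rfl
    · have hi' : i ≤ u.length := by simpa [Nat.lt_succ_iff] using hlt
      have := hg₀ i
      rwa [List.take_append_of_le_length hi'] at this ⊢
    · have := hg₀ (u ++ [n + 1]).length
      rwa [List.take_length, corner_append_singleton_zero] at this ⊢
  · rw [← corner_append_singleton_succ_two]
    exact (hg _ (corner_two_mem_DF_upperSeq _)).le

/-- The interval of sequences coded by `u`, between `lowerSeq u` and `upperSeq u`. -/
def codeInterval (u : List ℕ) : Set Seq3 := {w | lexLe (lowerSeq u) w ∧ lexLe w (upperSeq u)}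

lemma codeInterval_append_subset (u v : List ℕ) : codeInterval (u ++ v) ⊆ codeInterval u := by
  rintro w ⟨hlow, hup⟩
  rw [lowerSeq, substSeqs_append] at hlow
  rw [upperSeq, substSeqs_append] at hup
  exact ⟨lexLe_trans (lexLe_substSeqs u (twoZeros_lexLe (lowerSeq_apply_zero v))) hlow,
    lexLe_trans hup (lexLe_substSeqs u (lexLe_allTwos _))⟩

lemma toLex_substSeq_lt_of_lt {n m : ℕ} (hnm : n < m) {s t : Seq3} (hs : s 0 = 2) (ht : t 0 = 2) :
    toLex (substSeq m s) < toLex (substSeq n t) := by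
  obtain ⟨k, rfl⟩ := Nat.exists_eq_add_of_lt hnm
  have hblock : block (n + k + 1) 2 = block n 2 ++ 0 :: List.replicate k 0 := by
    rw [block, block, ← List.replicate_succ, List.cons_append, ← List.replicate_add]
    rfl
  rw [substSeq_eq_appendSeq, substSeq_eq_appendSeq n t, hs, ht, hblock, append_appendSeq]
  exact toLex_appendSeq_lt _ (toLex_lt_of_apply_zero_lt
    (Fin.pos_iff_ne_zero.2 (substSeq_apply_zero_ne_zero _ _)))

lemma le_of_mem_codeInterval_of_mem_codeInterval {w : Seq3} {c u v : List ℕ} {n m : ℕ}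
    (hu : w ∈ codeInterval (c ++ n :: u)) (hv : w ∈ codeInterval (c ++ m :: v)) : m ≤ n := by
  by_contra! hlt
  have h : toLex (upperSeq (c ++ m :: v)) < toLex (lowerSeq (c ++ n :: u)) := by
    rw [upperSeq, lowerSeq, substSeqs_append, substSeqs_append]
    exact toLex_substSeqs_lt c
      (toLex_substSeq_lt_of_lt hlt (upperSeq_apply_zero v) (lowerSeq_apply_zero u))
  exact h.not_ge (lexLe_iff_toLex_le.1 (lexLe_trans hu.1 hv.2))

lemma eq_of_mem_codeInterval_of_mem_codeInterval {w : Seq3} {u v : List ℕ}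
    (huv : u.length = v.length) (hu : w ∈ codeInterval u) (hv : w ∈ codeInterval v) : u = v := by
  suffices ∀ c, w ∈ codeInterval (c ++ u) → w ∈ codeInterval (c ++ v) → u = v from this [] hu hv
  clear hu hv
  induction u generalizing v with
  | nil => exact fun _ _ _ => (List.length_eq_zero_iff.1 huv.symm).symm
  | cons n u ih =>
    intro c hu hv
    obtain ⟨m, v, rfl⟩ := List.exists_cons_of_length_eq_add_one huv.symm
    obtain rfl : n = m := le_antisymm (le_of_mem_codeInterval_of_mem_codeInterval hv hu)
      (le_of_mem_codeInterval_of_mem_codeInterval hu hv)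
    rw [ih (by simpa using huv) (c ++ [n]) (by simpa using hu) (by simpa using hv)]

/-! ### Approximation by the sequences `lowerSeq u` -/

lemma eqOn_lowerSeq_append_cons (u : List ℕ) (M : ℕ) (v : List ℕ) :
    Set.EqOn (lowerSeq (u ++ M :: v)) (lowerSeq u) (Set.Iio M) := by
  rw [lowerSeq, substSeqs_append]
  exact (eqOn_substSeqs u (eqOn_substSeq_twoZeros M (lowerSeq_apply_zero v))).mono
    (Set.Iio_subset_Iio M.le_succ)

lemma substSeq_zero_allTwos : substSeq 0 allTwos = allTwos := by
  ext k : 1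
  induction k with
  | zero => exact substSeq_apply_zero_eq_two 0 rfl
  | succ k ih => rw [substSeq_eq_appendSeq]; exact ih

lemma upperSeq_append_zero (u : List ℕ) : upperSeq (u ++ [0]) = upperSeq u := by
  rw [upperSeq, substSeqs_append]
  exact congrArg (substSeqs u) substSeq_zero_allTwos

/-- The sequences `lowerSeq (u ++ [n])` decrease to `lowerSeq u`, so `w` is either close to
`lowerSeq u`, or coded by some `u ++ [n]`, or in a gap, where `DF` is constant. -/
lemma exists_DF_eq_or_eqOn_or_mem_codeInterval {w : Seq3} {u : List ℕ} (hwu : w ∈ codeInterval u)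
    (M : ℕ) :
    (∃ v, DF w = DF (lowerSeq v) ∨ Set.EqOn w (lowerSeq v) (Set.Iio M)) ∨
      ∃ n, w ∈ codeInterval (u ++ [n]) := by
  classical
  rcases lexLe_total w (lowerSeq (u ++ [M])) with hle | hge
  · exact Or.inl ⟨u, Or.inr
      (eqOn_of_lexLe_of_lexLe hwu.1 hle (eqOn_lowerSeq_append_cons u M []).symm).symm⟩
  have hex : ∃ n, lexLe (lowerSeq (u ++ [n])) w := ⟨M, hge⟩
  rcases hn : Nat.find hex with _ | n
  · refine Or.inr ⟨0, hn ▸ Nat.find_spec hex, ?_⟩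
    rw [upperSeq_append_zero]
    exact hwu.2
  · have hle : lexLe w (lowerSeq (u ++ [n])) :=
      (lexLe_total w _).resolve_right (Nat.find_min hex (by omega))
    rcases lexLe_total w (upperSeq (u ++ [n + 1])) with hup | hup
    · exact Or.inr ⟨n + 1, hn ▸ Nat.find_spec hex, hup⟩
    · exact Or.inl ⟨u ++ [n], Or.inl ((DF_mono hle).antisymm
        ((DF_lowerSeq_subset_DF_upperSeq_succ u n).trans (DF_mono hup)))⟩

lemma exists_DF_eq_or_eqOn {w : Seq3} (hw : w 0 = 2) (M : ℕ) :
    ∃ u, DF w = DF (lowerSeq u) ∨ Set.EqOn w (lowerSeq u) (Set.Iio M) := by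
  by_contra hnone
  have hcode (d : ℕ) : ∃ u : List ℕ, u.length = d ∧ w ∈ codeInterval u := by
    induction d with
    | zero => exact ⟨[], rfl, twoZeros_lexLe hw, lexLe_allTwos w⟩
    | succ d ih =>
      obtain ⟨u, rfl, hwu⟩ := ih
      obtain ⟨n, hn⟩ := (exists_DF_eq_or_eqOn_or_mem_codeInterval hwu M).resolve_left hnone
      exact ⟨u ++ [n], by simp, hn⟩
  obtain ⟨u, hu, hwu⟩ := hcode (2 * M)
  exact hnone ⟨u, Or.inr (eqOn_of_lexLe_of_lexLe hwu.1 hwu.2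
    (eqOn_substSeqs_of_le_length hu.ge _ _)).symm⟩

/-! ### The space of digit frequency sets -/

section Space

open TopologicalSpace (NonemptyCompacts)

/-- The set `DF w`, as a point of the space of nonempty compact sets with the Hausdorff metric. -/
noncomputable def compactDF (w : {w : Seq3 // w ∈ MaxSet}) : NonemptyCompacts (Fin 3 → ℝ) :=
  ⟨⟨DF w.1, isCompact_DF w.2.1⟩, ⟨stdVec 0, stdVec_zero_mem_DF w.2.1⟩⟩

lemma dist_compactDF_le {M : ℕ} (hM : 1 ≤ M) {w w' : {w : Seq3 // w ∈ MaxSet}}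
    (h : Set.EqOn w.1 w'.1 (Set.Iio M)) : dist (compactDF w) (compactDF w') ≤ (M : ℝ)⁻¹ := by
  rw [Metric.NonemptyCompacts.dist_eq]
  exact Metric.hausdorffDist_le_of_infDist (by positivity)
    (fun _ hx => infDist_DF_le_of_eqOn w'.2.1 hM h hx)
    (fun _ hx => infDist_DF_le_of_eqOn w.2.1 hM h.symm hx)

lemma exists_one_le_and_inv_lt {ε : ℝ} (hε : 0 < ε) : ∃ M : ℕ, 1 ≤ M ∧ (M : ℝ)⁻¹ < ε := by
  obtain ⟨n, hn⟩ := exists_nat_one_div_lt hε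
  exact ⟨n + 1, n.succ_pos, by simpa using hn⟩

lemma eventually_eqOn_Iio (w : Seq3) (M : ℕ) : ∀ᶠ w' in 𝓝 w, Set.EqOn w' w (Set.Iio M) :=
  (Set.finite_Iio M).eventually_all.2 fun i _ =>
    ((isOpen_discrete {w i}).preimage (continuous_apply i)).mem_nhds (Set.mem_singleton _)

lemma continuous_compactDF : Continuous compactDF := by
  refine continuous_iff_continuousAt.2 fun w => Metric.tendsto_nhds.2 fun ε hε => ?_
  obtain ⟨M, hM, hlt⟩ := exists_one_le_and_inv_lt hε
  filter_upwards [continuous_subtype_val.continuousAt.eventually (eventually_eqOn_Iio w.1 M)]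
    with w' hw'
  exact (dist_compactDF_le hM hw').trans_lt hlt

lemma isClosed_setOf_lexLe : IsClosed {p : Seq3 × Seq3 | lexLe p.1 p.2} := by
  simp only [lexLe_iff_forall_agree, Set.ofPred_forall]
  refine isClosed_iInter fun n => isClosed_imp ?_ ?_
  · have hfinite : {p : Seq3 × Seq3 | ∀ i < n, p.1 i = p.2 i} =
        ⋂ i ∈ Set.Iio n, {p : Seq3 × Seq3 | p.1 i = p.2 i} := by
      ext
      simp
    rw [hfinite]
    exact (Set.finite_Iio n).isOpen_biInter fun i _ =>
      (isOpen_discrete {q : Fin 3 × Fin 3 | q.1 = q.2}).preimage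
        (f := fun p : Seq3 × Seq3 => (p.1 i, p.2 i)) (by fun_prop)
  · exact isClosed_le (by fun_prop) (by fun_prop)

lemma continuous_shift : Continuous shift := continuous_pi fun n => continuous_apply (n + 1)

lemma isClosed_MaxSet : IsClosed MaxSet := by
  rw [MaxSet, Set.ofPred_and, Set.ofPred_forall]
  exact (isClosed_eq (continuous_apply 0) continuous_const).inter <| isClosed_iInter fun r =>
    isClosed_setOf_lexLe.preimage ((continuous_shift.iterate r).prodMk continuous_id)

instance compactSpace_range_compactDF : CompactSpace (Set.range compactDF) :=
  have : CompactSpace {w : Seq3 // w ∈ MaxSet} :=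
    isCompact_iff_compactSpace.1 isClosed_MaxSet.isCompact
  isCompact_iff_compactSpace.1 (isCompact_range continuous_compactDF)

lemma isOpen_setOf_not_superset {X : Type*} [TopologicalSpace X] [T1Space X] (B : Set X) :
    IsOpen {K : NonemptyCompacts X | ¬ B ⊆ K} := by
  have hunion : {K : NonemptyCompacts X | ¬ B ⊆ K} =
      ⋃ x ∈ B, {K : NonemptyCompacts X | (K : Set X) ⊆ {x}ᶜ} := by
    ext K
    simp [Set.not_subset]
  rw [hunion]
  exact isOpen_biUnion fun x _ =>
    NonemptyCompacts.isOpen_subsets_of_isOpen isOpen_compl_singleton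

/-- The digit frequency sets strictly between `DF (lowerSeq u)` and `DF (upperSeq u)` for some code
`u` with the property `P`. -/
def codedSets (P : List ℕ → Prop) : Set (Set.range compactDF) :=
  ⋃ u ∈ {u | P u}, {Λ | ¬ (Λ.1 : Set (Fin 3 → ℝ)) ⊆ DF (lowerSeq u) ∧
    ¬ DF (upperSeq u) ⊆ (Λ.1 : Set (Fin 3 → ℝ))}

lemma isOpen_codedSets (P : List ℕ → Prop) : IsOpen (codedSets P) :=
  isOpen_biUnion fun u _ =>
    ((NonemptyCompacts.isClosed_subsets_of_isClosed
      (isCompact_DF (lowerSeq_apply_zero u)).isClosed).isOpen_compl.inter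
        (isOpen_setOf_not_superset _)).preimage continuous_subtype_val

lemma exists_mem_codeInterval_of_mem_codedSets {P : List ℕ → Prop} {w : {w : Seq3 // w ∈ MaxSet}}
    (h : ⟨compactDF w, w, rfl⟩ ∈ codedSets P) : ∃ u, P u ∧ w.1 ∈ codeInterval u := by
  obtain ⟨u, hu, hlower, hupper⟩ := Set.mem_iUnion₂.1 h
  exact ⟨u, hu, (lexLe_total _ _).resolve_right fun hle => hlower (DF_mono hle),
    (lexLe_total _ _).resolve_right fun hle => hupper (DF_mono hle)⟩

lemma not_DF_lowerSeq_append_zero_subset (u : List ℕ) :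
    ¬ DF (lowerSeq (u ++ [0])) ⊆ DF (lowerSeq u) := fun h => by
  have hle := sepFunctional_nonpos_of_mem_DF_lowerSeq u (h (corner_one_mem_DF_lowerSeq (u ++ [0])))
  have hcorner : sepFunctional u (substEquivs (u ++ [0]) (stdVec 1)) = 1 := by
    rw [substEquivs_append, sepFunctional_substEquivs]
    simp [substEquivs, substEquiv_apply, stdVec]
  rw [map_corner, hcorner, mul_one] at hle
  exact hle.not_gt (inv_pos.2 (coordSum_substEquivs_stdVec_pos _ _))

lemma not_DF_upperSeq_subset_DF_lowerSeq_append_zero (u : List ℕ) :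
    ¬ DF (upperSeq u) ⊆ DF (lowerSeq (u ++ [0])) := fun h => by
  have hle := sepFunctional_nonpos_of_mem_DF_lowerSeq (u ++ [0]) (h (corner_two_mem_DF_upperSeq u))
  have hcorner : sepFunctional (u ++ [0]) (substEquivs u (stdVec 2)) = 1 := by
    rw [sepFunctional_append_substEquivs, sepFunctional_apply]
    simp [substEquivs, substEquiv_symm_apply, stdVec]
  rw [map_corner, hcorner, mul_one] at hle
  exact hle.not_gt (inv_pos.2 (coordSum_substEquivs_stdVec_pos _ _))

lemma exists_dist_compactDF_lowerSeq_le (w : {w : Seq3 // w ∈ MaxSet}) {M : ℕ} (hM : 1 ≤ M) :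
    ∃ u, dist (compactDF ⟨lowerSeq u, lowerSeq_mem_MaxSet u⟩) (compactDF w) ≤ (M : ℝ)⁻¹ := by
  obtain ⟨u, hDF | heqOn⟩ := exists_DF_eq_or_eqOn w.2.1 M
  · refine ⟨u, ?_⟩
    rw [show compactDF ⟨lowerSeq u, lowerSeq_mem_MaxSet u⟩ = compactDF w from
      NonemptyCompacts.ext hDF.symm, dist_self]
    positivity
  · exact ⟨u, dist_compactDF_le hM heqOn.symm⟩

lemma Extendable.dense_codedSets {P : List ℕ → Prop} (hP : Extendable P) :
    Dense (codedSets P) := by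
  rw [Metric.dense_iff]
  rintro ⟨_, w, rfl⟩ ε hε
  obtain ⟨M, hM, hlt⟩ := exists_one_le_and_inv_lt (half_pos hε)
  obtain ⟨u, hu⟩ := exists_dist_compactDF_lowerSeq_le w hM
  obtain ⟨v, hv⟩ := hP (u ++ [M])
  let w' : {w : Seq3 // w ∈ MaxSet} := ⟨_, lowerSeq_mem_MaxSet (u ++ [M] ++ v ++ [0])⟩
  have hw' : dist (compactDF w') (compactDF ⟨lowerSeq u, lowerSeq_mem_MaxSet u⟩) ≤ (M : ℝ)⁻¹ :=
    dist_compactDF_le hM (by simpa [w'] using eqOn_lowerSeq_append_cons u M (v ++ [0]))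
  refine ⟨⟨compactDF w', w', rfl⟩, ?_, Set.mem_biUnion hv
    ⟨not_DF_lowerSeq_append_zero_subset _, not_DF_upperSeq_subset_DF_lowerSeq_append_zero _⟩⟩
  calc dist (compactDF w') (compactDF w)
      ≤ dist (compactDF w') (compactDF ⟨lowerSeq u, lowerSeq_mem_MaxSet u⟩) +
          dist (compactDF ⟨lowerSeq u, lowerSeq_mem_MaxSet u⟩) (compactDF w) := dist_triangle _ _ _
    _ < ε := by linarith

lemma dense_iInter_codedSets {ι : Type*} [Countable ι] {P : ι → List ℕ → Prop}
    (hP : ∀ i, Extendable (P i)) : Dense (⋂ i, codedSets (P i)) :=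
  dense_iInter_of_isOpen (fun i => isOpen_codedSets (P i)) fun i => (hP i).dense_codedSets

lemma isGδ_iInter_codedSets {ι : Type*} [Countable ι] (P : ι → List ℕ → Prop) :
    IsGδ (⋂ i, codedSets (P i)) :=
  IsGδ.iInter_of_isOpen fun i => isOpen_codedSets (P i)

end Space

/-! ### Convex sets with a flat direction -/

section ConvexHull

variable {E : Type*} [AddCommGroup E] [Module ℝ E]

lemma notMem_convexHull_of_eventually_nonpos {κ : Type*} {l : Filter κ} {f : κ → E →ₗ[ℝ] ℝ}
    {H : Set E} (hH : ∀ x ∈ H, ∀ᶠ k in l, f k x ≤ 0) {v : E} (hv : ∃ᶠ k in l, 0 < f k v) :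
    v ∉ convexHull ℝ H := fun hvH => by
  have hconvex : Convex ℝ {x | ∀ᶠ k in l, f k x ≤ 0} := fun x hx y hy a b ha hb _ => by
    filter_upwards [hx, hy] with k hxk hyk
    rw [map_add, map_smul, map_smul]
    exact add_nonpos (mul_nonpos_of_nonneg_of_nonpos ha hxk)
      (mul_nonpos_of_nonneg_of_nonpos hb hyk)
  have hnonpos : ∀ᶠ k in l, f k v ≤ 0 := convexHull_min hH hconvex hvH
  exact hv (hnonpos.mono fun _ => not_lt_of_ge)

lemma mem_extremePoints_convexHull_insert {H : Set E} {v : E} (hv : v ∉ convexHull ℝ H) :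
    v ∈ Set.extremePoints ℝ (convexHull ℝ (insert v H)) := by
  obtain rfl | hH := H.eq_empty_or_nonempty
  · simp
  rw [(convex_convexHull ℝ _).mem_extremePoints_iff_mem_sdiff_convexHull_sdiff]
  refine ⟨subset_convexHull ℝ _ (Set.mem_insert v H), fun hmem => ?_⟩
  -- The cone with apex `v` over `convexHull ℝ H` is convex and, its apex being removed, omits `v`.
  let C := ConvexCone.hull ℝ ((fun x => -v + x) '' convexHull ℝ H)
  have mem_C {x : E} := ConvexCone.mem_hull_of_convex (x := x)
    ((convex_convexHull ℝ H).translate (-v))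
  have hsubset : convexHull ℝ (insert v H) \ {v} ⊆ (fun x => -v + x) ⁻¹' C := by
    rintro x ⟨hx, hxv⟩
    rw [convexHull_insert hH, convexJoin_singleton_left] at hx
    obtain ⟨y, hy, a, t, ha, ht, hat, rfl⟩ := Set.mem_iUnion₂.1 hx
    obtain rfl : a = 1 - t := eq_sub_of_add_eq hat
    obtain rfl | htpos := ht.eq_or_lt
    · simp at hxv
    · exact mem_C.2 ⟨t, htpos, -v + y, ⟨y, hy, rfl⟩, by module⟩
  have hvC := convexHull_min hsubset (C.convex.translate_preimage_right _) hmem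
  obtain ⟨c, hc, _, ⟨y, hy, rfl⟩, hzero⟩ := mem_C.1 hvC
  simp only at hzero
  rw [neg_add_cancel, smul_eq_zero_iff_right hc.ne', neg_add_eq_zero] at hzero
  exact hv (hzero ▸ hy)

end ConvexHull

lemma eq_of_accPt_of_tendsto {X : Type*} [TopologicalSpace X] [T2Space X] {p : ℕ → X} {v x : X}
    (hp : Tendsto p atTop (𝓝 v)) {A : Set X} (hA : A ⊆ insert v (Set.range p))
    (hx : AccPt x (𝓟 A)) : x = v := by
  by_contra hne
  obtain ⟨U, W, hU, hW, hxU, hvW, hUW⟩ := t2_separation hne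
  obtain ⟨N, hN⟩ := eventually_atTop.1 (hp.eventually (hW.mem_nhds hvW))
  have hsubset : U ∩ A ⊆ insert v (p '' Set.Iio N) := by
    rintro y ⟨hyU, hyA⟩
    obtain rfl | ⟨i, rfl⟩ := hA hyA
    · exact Set.mem_insert _ _
    · exact Or.inr ⟨i, not_le.1 fun hi => Set.disjoint_left.1 hUW hyU (hN i hi), rfl⟩
  exact Set.Infinite.of_accPt ((hx.nhds_inter (hU.mem_nhds hxU)).mono (principal_mono.2 hsubset))
    (((Set.finite_Iio N).image p).insert v)

section FiniteDimensional

open NormedSpace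

variable {E : Type*} [NormedAddCommGroup E] [NormedSpace ℝ E]

lemma isCompact_convexHull [FiniteDimensional ℝ E] {C : Set E} (hC : IsCompact C) :
    IsCompact (convexHull ℝ C) := by
  have hcaratheodory : convexHull ℝ C = ⋃ n ∈ Set.Iic (Module.finrank ℝ E + 1),
      (fun q : (Fin n → ℝ) × (Fin n → E) => ∑ i, q.1 i • q.2 i) ''
        (stdSimplex ℝ (Fin n) ×ˢ Set.univ.pi fun _ => C) := by
    refine Set.Subset.antisymm (fun x hx => ?_) (Set.iUnion₂_subset fun n _ => ?_)
    · obtain ⟨ι, _, z, a, hz, hindep, ha, hsum, rfl⟩ := eq_pos_convex_span_of_mem_convexHull hx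
      let e := Fintype.equivFin ι
      refine Set.mem_iUnion₂.2 ⟨Fintype.card ι, ?_, (a ∘ e.symm, z ∘ e.symm), ⟨⟨?_, ?_⟩, ?_⟩, ?_⟩
      · exact hindep.card_le_finrank_succ.trans (Nat.add_le_add_right (Submodule.finrank_le _) 1)
      · exact fun i => (ha _).le
      · exact (e.symm.sum_comp a).trans hsum
      · exact fun i _ => hz ⟨_, rfl⟩
      · exact e.symm.sum_comp fun i => a i • z i
    · rintro _ ⟨⟨a, z⟩, ⟨ha, hz⟩, rfl⟩
      exact (convex_convexHull ℝ C).sum_mem (fun i _ => ha.1 i) ha.2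
        fun i _ => subset_convexHull ℝ C (hz i (Set.mem_univ i))
  rw [hcaratheodory]
  exact (Set.finite_Iic _).isCompact_biUnion fun n _ =>
    ((isCompact_stdSimplex ℝ (Fin n)).prod (isCompact_univ_pi fun _ => hC)).image (by fun_prop)

lemma exists_ne_zero_of_eventually_nonpos [FiniteDimensional ℝ E] {f : ℕ → StrongDual ℝ E}
    (hf : ∀ k, f k ≠ 0) :
    ∃ g : StrongDual ℝ E, g ≠ 0 ∧ ∀ x, (∀ᶠ k in atTop, f k x ≤ 0) → g x ≤ 0 := by
  obtain ⟨g, hg, φ, hφ, hlim⟩ := (isCompact_sphere (0 : StrongDual ℝ E) 1).tendsto_subseq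
    (x := fun k => normalize (f k)) fun k => by simp [hf k]
  refine ⟨g, ne_zero_of_mem_unit_sphere ⟨g, hg⟩, fun x hx => ?_⟩
  have hlim_apply : Tendsto (fun n => normalize (f (φ n)) x) atTop (𝓝 (g x)) :=
    ((ContinuousLinearMap.apply ℝ ℝ x).continuous.tendsto g).comp hlim
  refine le_of_tendsto hlim_apply ((hφ.tendsto_atTop.eventually hx).mono fun n hn => ?_)
  exact mul_nonpos_of_nonneg_of_nonpos (inv_nonneg.2 (norm_nonneg _)) hn

/-- The directions in which the points of `S` are seen from `v`. -/
def unitDirections (S : Set E) (v : E) : Set E := (fun x => normalize (x - v)) '' (S \ {v})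

/-- The line through `v` in the direction `d` is approached on both sides of `v` by points
of `S`. -/
def IsFlatDirection (S : Set E) (v d : E) : Prop :=
  d ∈ closure (unitDirections S v) ∧ -d ∈ closure (unitDirections S v)

lemma unitDirections_subset_sphere (S : Set E) (v : E) :
    unitDirections S v ⊆ Metric.sphere 0 1 := by
  rintro _ ⟨x, hx, rfl⟩
  simpa [sub_eq_zero] using hx.2

lemma exists_isFlatDirection [FiniteDimensional ℝ E] {S : Set E} {v : E}
    (h : ∀ ε > 0, ∃ x ∈ unitDirections S v, ∃ y ∈ unitDirections S v, ‖x + y‖ ≤ ε) :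
    ∃ d, IsFlatDirection S v d := by
  have hcompact : IsCompact (closure (unitDirections S v)) :=
    (isCompact_sphere 0 1).of_isClosed_subset isClosed_closure
      (closure_minimal (unitDirections_subset_sphere S v) Metric.isClosed_sphere)
  obtain ⟨x₁, hx₁, -⟩ := h 1 one_pos
  obtain ⟨⟨x, y⟩, ⟨hx, hy⟩, hmin⟩ := (hcompact.prod hcompact).exists_isMinOn
    ⟨(x₁, x₁), subset_closure hx₁, subset_closure hx₁⟩
    (f := fun p : E × E => ‖p.1 + p.2‖) (by fun_prop)
  have hzero : ‖x + y‖ ≤ 0 := le_of_forall_pos_le_add fun ε hε => by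
    obtain ⟨x', hx', y', hy', hle⟩ := h ε hε
    rw [zero_add]
    exact (isMinOn_iff.1 hmin (x', y') ⟨subset_closure hx', subset_closure hy'⟩).trans hle
  refine ⟨x, hx, ?_⟩
  rwa [neg_eq_of_add_eq_zero_right (norm_le_zero_iff.1 hzero)]

namespace IsFlatDirection

variable {S : Set E} {v d : E}

lemma ne_zero (hd : IsFlatDirection S v d) : d ≠ 0 :=
  ne_zero_of_mem_unit_sphere
    ⟨d, closure_minimal (unitDirections_subset_sphere S v) Metric.isClosed_sphere hd.1⟩

lemma map_eq_zero [FiniteDimensional ℝ E] (hd : IsFlatDirection S v d) {g : E →ₗ[ℝ] ℝ}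
    (hg : ∀ x ∈ S, g x ≤ g v) : g d = 0 := by
  have hsubset : unitDirections S v ⊆ {x | g x ≤ 0} := by
    rintro _ ⟨x, hx, rfl⟩
    change g (‖x - v‖⁻¹ • (x - v)) ≤ 0
    rw [map_smul, map_sub]
    exact mul_nonpos_of_nonneg_of_nonpos (inv_nonneg.2 (norm_nonneg _)) (sub_nonpos.2 (hg x hx.1))
  have hclosure := closure_minimal hsubset
    (isClosed_le g.continuous_of_finiteDimensional continuous_const)
  have hneg : g (-d) ≤ 0 := hclosure hd.2
  rw [map_neg] at hneg
  exact le_antisymm (hclosure hd.1) (neg_nonpos.1 hneg)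

end IsFlatDirection

lemma exists_forall_map_sub_add_norm_nonpos [FiniteDimensional ℝ E] {K : Set E}
    (hK : IsCompact K) {v : E} (hv : v ∉ convexHull ℝ K) :
    ∃ h : StrongDual ℝ E, ∃ c > 0, ∀ x ∈ K, h (x - v) + c * ‖x - v‖ ≤ 0 := by
  obtain ⟨h, s, hs, hsv⟩ := geometric_hahn_banach_closed_point (convex_convexHull ℝ K)
    (isCompact_convexHull hK).isClosed hv
  obtain ⟨R, hR, hKR⟩ :=
    (hK.isBounded.sub (Bornology.isBounded_singleton (x := v))).exists_pos_norm_le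
  refine ⟨h, (h v - s) / R, div_pos (sub_pos.2 hsv) hR, fun x hx => ?_⟩
  have hnorm : ‖x - v‖ / R ≤ 1 := (div_le_one hR).2 (hKR _ (Set.sub_mem_sub hx rfl))
  have hle := mul_le_of_le_one_right (sub_pos.2 hsv).le hnorm
  rw [map_sub, div_mul_eq_mul_div, mul_div_assoc]
  linarith [hs x (subset_convexHull ℝ K hx)]

lemma convex_setOf_map_sub_add_norm_nonpos (h : StrongDual ℝ E) {c : ℝ} (hc : 0 ≤ c) (v : E) :
    Convex ℝ {x | h (x - v) + c * ‖x - v‖ ≤ 0} := by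
  have hconvexOn : ConvexOn ℝ Set.univ fun x => h x + c * ‖x‖ :=
    (h.toLinearMap.convexOn convex_univ).add (convexOn_univ_norm.smul hc)
  simpa [sub_eq_add_neg] using! (hconvexOn.convex_le 0).translate_preimage_left (-v)

/-- If `v` were isolated among the extreme points, `S` would lie in a cone with apex `v` that
contains no line. -/
theorem IsFlatDirection.accPt_extremePoints [FiniteDimensional ℝ E] {S : Set E} {v d : E}
    (hd : IsFlatDirection S v d) (hS : IsCompact S) (hconvex : Convex ℝ S)
    (hv : v ∈ Set.extremePoints ℝ S) : AccPt v (𝓟 (Set.extremePoints ℝ S)) := by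
  by_contra hacc
  let K := closure (Set.extremePoints ℝ S \ {v})
  have hKS : K ⊆ S :=
    closure_minimal (Set.sdiff_subset.trans extremePoints_subset) hS.isClosed
  have hv_notMem : v ∉ K := fun h =>
    hacc (accPt_principal_iff_clusterPt.2 (mem_closure_iff_clusterPt.1 h))
  have hKcompact : IsCompact K := hS.of_isClosed_subset isClosed_closure hKS
  have hvK : v ∉ convexHull ℝ K := fun h =>
    (hconvex.mem_extremePoints_iff_mem_sdiff_convexHull_sdiff.1 hv).2
      (convexHull_mono (Set.subset_sdiff_singleton hKS hv_notMem) h)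
  obtain ⟨h, c, hc, hle⟩ := exists_forall_map_sub_add_norm_nonpos hKcompact hvK
  have hcone : S ⊆ {x | h (x - v) + c * ‖x - v‖ ≤ 0} := by
    nth_rw 1 [← closure_convexHull_extremePoints hS hconvex]
    refine closure_minimal (convexHull_min (fun x hx => ?_)
      (convex_setOf_map_sub_add_norm_nonpos h hc.le v)) (isClosed_le (by fun_prop) (by fun_prop))
    obtain rfl | hxv := eq_or_ne x v
    · simp
    · exact hle x (subset_closure ⟨hx, hxv⟩)
  have hdirections : unitDirections S v ⊆ {x | h x ≤ -c} := by
    rintro _ ⟨x, ⟨hxS, hxv⟩, rfl⟩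
    have hpos : 0 < ‖x - v‖ := norm_pos_iff.2 (sub_ne_zero.2 hxv)
    change h (‖x - v‖⁻¹ • (x - v)) ≤ -c
    rw [map_smul, smul_eq_mul, inv_mul_le_iff₀ hpos]
    linarith [show h (x - v) + c * ‖x - v‖ ≤ 0 from hcone hxS]
  have hclosure := closure_minimal hdirections (isClosed_le (by fun_prop) continuous_const)
  have hpos : h d ≤ -c := hclosure hd.1
  have hneg : h (-d) ≤ -c := hclosure hd.2
  rw [map_neg] at hneg
  linarith

end FiniteDimensional

lemma exists_smul_eq_of_mem_ker {K V : Type*} [Field K] [AddCommGroup V] [Module K V]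
    (hV : Module.finrank K V = 3) {f g : Module.Dual K V} (hf : f ≠ 0) {y : V} (hfy : f y = 0)
    (hgy : g y ≠ 0) {d e : V} (hd : d ≠ 0) (hfd : f d = 0) (hgd : g d = 0) (hfe : f e = 0)
    (hge : g e = 0) : ∃ c : K, c • d = e := by
  have : FiniteDimensional K V := Module.finite_of_finrank_eq_succ hV
  let g' : Module.Dual K (LinearMap.ker f) := g ∘ₗ (LinearMap.ker f).subtype
  have hg' : g' ≠ 0 := fun h => hgy (LinearMap.congr_fun h ⟨y, hfy⟩)
  have hker := Module.Dual.finrank_ker_add_one_of_ne_zero hf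
  have hker' := Module.Dual.finrank_ker_add_one_of_ne_zero hg'
  have hfinrank : Module.finrank K (LinearMap.ker g') = 1 := by omega
  let d' : LinearMap.ker g' := ⟨⟨d, hfd⟩, hgd⟩
  have hd' : d' ≠ 0 := fun h => hd (congrArg (fun z => (z.1 : V)) h)
  obtain ⟨c, hc⟩ := (finrank_eq_one_iff_of_nonzero' d' hd').1 hfinrank ⟨⟨e, hfe⟩, hge⟩
  exact ⟨c, congrArg (fun z => (z.1 : V)) hc⟩

lemma exists_coordSum_eq_one_and_map_ne_zero {g : (Fin 3 → ℝ) →ₗ[ℝ] ℝ} (hg : g ≠ 0) :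
    ∃ x, coordSum x = 1 ∧ g x ≠ 0 := by
  by_contra! hzero
  exact hg (LinearMap.pi_ext' fun a => LinearMap.ext_ring (hzero _ (coordSum_stdVec a)))

theorem IsFlatDirection.existsUnique_isSuppLine {S : Set (Fin 3 → ℝ)} {v d : Fin 3 → ℝ}
    (hd : IsFlatDirection S v d) (hS : ∀ x ∈ S, coordSum x = 1) (hv : coordSum v = 1)
    {g : (Fin 3 → ℝ) →ₗ[ℝ] ℝ} (hg : g ≠ 0) (hgv : g v = 0) (hgS : ∀ x ∈ S, g x ≤ 0) :
    ∃! L, IsSuppLine S v L := by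
  have hcoordSum : coordSum d = 0 := hd.map_eq_zero fun x hx => ((hS x hx).trans hv.symm).le
  have hgS' : ∀ x ∈ S, g x ≤ g v := fun x hx => (hgS x hx).trans hgv.ge
  obtain ⟨x, hx, hgx⟩ := exists_coordSum_eq_one_and_map_ne_zero hg
  refine ⟨{x | ∃ t : ℝ, x = v + t • d}, ⟨d, hd.ne_zero, (coordSum_apply d).symm.trans hcoordSum,
    rfl, g, hd.map_eq_zero hgS', ⟨x, (coordSum_apply x).symm.trans hx, hgv ▸ hgx⟩, hgS'⟩, ?_⟩
  rintro _ ⟨e, he, he₀, rfl, f, hfe, ⟨y, hy, hfy⟩, hfS⟩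
  rw [← coordSum_apply] at he₀ hy
  obtain ⟨c, rfl⟩ : ∃ c : ℝ, c • d = e :=
    exists_smul_eq_of_mem_ker (Module.finrank_fin_fun ℝ) (f := coordSum) (g := f) (y := y - v)
      (fun h => by simp [h] at hv) (by rw [map_sub, hy, hv, sub_self])
      (by rwa [map_sub, sub_ne_zero]) hd.ne_zero hcoordSum (hd.map_eq_zero hfS) he₀ hfe
  have hc : c ≠ 0 := fun h => he (by rw [h, zero_smul])
  ext z
  exact ⟨fun ⟨t, ht⟩ => ⟨t * c, by rw [ht, mul_smul]⟩,
    fun ⟨t, ht⟩ => ⟨t / c, by rw [ht, smul_smul, div_mul_cancel₀ _ hc]⟩⟩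

/-! ### Infinite codes -/

/-- The first `k` terms of an infinite code. -/
def codePrefix (c : ℕ → ℕ) (k : ℕ) : List ℕ := (List.range k).map c

/-- `c` is an infinite code of `w`: each of its prefixes is a code of an interval containing `w`. -/
def IsCode (w : Seq3) (c : ℕ → ℕ) : Prop := ∀ k, w ∈ codeInterval (codePrefix c k)

/-- The `k`-th vertex of the digit frequency set of a sequence with code `c`. -/
noncomputable def vertex (c : ℕ → ℕ) (k : ℕ) : Fin 3 → ℝ := corner (codePrefix c k) 0

section CodePrefix

variable (c : ℕ → ℕ)

lemma length_codePrefix (k : ℕ) : (codePrefix c k).length = k := by simp [codePrefix]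

lemma codePrefix_succ (k : ℕ) : codePrefix c (k + 1) = codePrefix c k ++ [c k] := by
  simp [codePrefix, List.range_succ]

lemma take_codePrefix {i k : ℕ} (hik : i ≤ k) : (codePrefix c k).take i = codePrefix c i := by
  rw [codePrefix, ← List.map_take, List.take_range, min_eq_left hik, codePrefix]

lemma exists_codePrefix_append_eq {i k : ℕ} (hik : i ≤ k) :
    ∃ u, codePrefix c i ++ u = codePrefix c k :=
  ⟨(codePrefix c k).drop i, by rw [← take_codePrefix c hik, List.take_append_drop]⟩

lemma antitone_triangle_codePrefix : Antitone fun k => triangle (codePrefix c k) := by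
  intro i k hik
  obtain ⟨u, hu⟩ := exists_codePrefix_append_eq c hik
  simp only [← hu]
  exact triangle_append_subset _ u

lemma corner_codePrefix_one (k : ℕ) : corner (codePrefix c k) 1 = vertex c (k + 1) := by
  rw [vertex, codePrefix_succ, corner_append_singleton_zero]

lemma coordSum_vertex (k : ℕ) : coordSum (vertex c k) = 1 := (corner_mem_triangle _ 0).1

lemma sepFunctional_codePrefix_vertex_nonpos {i k : ℕ} (hik : i ≤ k) :
    sepFunctional (codePrefix c k) (vertex c i) ≤ 0 := by
  obtain ⟨u, hu⟩ := exists_codePrefix_append_eq c hik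
  rw [vertex, map_corner, ← hu]
  exact mul_nonpos_of_nonneg_of_nonpos
    (inv_nonneg.2 (coordSum_substEquivs_stdVec_pos _ _).le)
    (sepFunctional_append_substEquivs_stdVec_zero_nonpos _ _)

lemma exists_forall_mem_triangle_codePrefix :
    ∃ v, ∀ k, v ∈ triangle (codePrefix c k) := by
  simpa only [Set.Nonempty, Set.mem_iInter] using
    IsCompact.nonempty_iInter_of_sequence_nonempty_isCompact_isClosed
      (fun k => triangle (codePrefix c k))
      (fun k => antitone_triangle_codePrefix c k.le_succ) (fun k => ⟨_, corner_mem_triangle _ 0⟩)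
      (isCompact_triangle _) fun k => isClosed_triangle _

end CodePrefix

lemma take_mem_codeInterval {w : Seq3} {u : List ℕ} (hu : w ∈ codeInterval u) (k : ℕ) :
    w ∈ codeInterval (u.take k) :=
  codeInterval_append_subset (u.take k) (u.drop k) (by rwa [List.take_append_drop])

lemma exists_isCode {w : Seq3} (h : ∀ k, ∃ u : List ℕ, k ≤ u.length ∧ w ∈ codeInterval u) :
    ∃ c, IsCode w c := by
  choose u hlength hmem using h
  refine ⟨fun i => (u (i + 1)).getD i 0, fun k => ?_⟩
  suffices hprefix : codePrefix (fun i => (u (i + 1)).getD i 0) k = (u k).take k from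
    hprefix ▸ take_mem_codeInterval (hmem k) k
  refine List.ext_getElem (by simp [length_codePrefix, hlength k]) fun i hi hi' => ?_
  have hik : i < k := by simpa [length_codePrefix] using hi
  have htake : (u (i + 1)).take (i + 1) = (u k).take (i + 1) :=
    eq_of_mem_codeInterval_of_mem_codeInterval
      (by rw [List.length_take_of_le (hlength _),
        List.length_take_of_le (hik.trans_le (hlength k))])
      (take_mem_codeInterval (hmem _) _) (take_mem_codeInterval (hmem _) _)
  have hget := congrArg (fun l => l.getD i 0) htake
  simpa [codePrefix, List.getElem?_take, List.getD_eq_getElem?_getD, hik.trans_le (hlength k)]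
    using hget

section Limit

variable {w : Seq3} {c : ℕ → ℕ} {v : Fin 3 → ℝ}

lemma IsCode.eq_codePrefix (hc : IsCode w c) {u : List ℕ} (hu : w ∈ codeInterval u) :
    u = codePrefix c u.length :=
  eq_of_mem_codeInterval_of_mem_codeInterval (length_codePrefix c _).symm hu (hc _)

lemma IsCode.vertex_mem_DF (hc : IsCode w c) (k : ℕ) : vertex c k ∈ DF w :=
  DF_mono (hc k).1 (by simpa [vertex] using corner_zero_mem_DF_lowerSeq (codePrefix c k) [])

lemma sepFunctional_pos_of_totallyIrrational (hv : TotallyIrrational v) {u : List ℕ}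
    (hu : v ∈ triangle u) : 0 < sepFunctional u v := by
  obtain ⟨m, hm, hsum⟩ := exists_int_sepFunctional u
  refine lt_of_le_of_ne (sepFunctional_apply u v ▸ hu.2 2) fun hzero => hv ⟨m, hm, ?_⟩
  rw [← hsum, ← hzero]

theorem IsCode.DF_eq_convexHull (hc : IsCode w c) (hw : w 0 = 2)
    (hlim : ∀ a, Tendsto (fun k => corner (codePrefix c k) a) atTop (𝓝 v)) :
    DF w = convexHull ℝ (insert v (Set.range (vertex c))) := by
  have hclosed : IsClosed (convexHull ℝ (insert v (Set.range (vertex c)))) :=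
    (isCompact_convexHull (hlim 0).isCompact_insert_range).isClosed
  have hsubset : convexHull ℝ (insert v (Set.range (vertex c))) ⊆ DF w := by
    refine convexHull_min (Set.insert_subset ?_ (Set.range_subset_iff.2 hc.vertex_mem_DF))
      (convex_DF hw)
    exact (isCompact_DF hw).isClosed.mem_of_tendsto (hlim 0) (.of_forall hc.vertex_mem_DF)
  refine Set.Subset.antisymm (fun x hx => ?_) hsubset
  by_contra hxhull
  obtain ⟨g, hgx, hg⟩ := exists_map_neg_and_forall_map_pos hclosed (convex_convexHull ℝ _)
    (fun y hy => coordSum_eq_one_of_mem_DF hw (hsubset hy)) (coordSum_eq_one_of_mem_DF hw hx) hxhull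
  have hg_vertex (i : ℕ) : 0 ≤ g (vertex c i) :=
    (hg _ (subset_convexHull ℝ _ (Or.inr ⟨i, rfl⟩))).le
  obtain ⟨k, hk⟩ := ((g.continuous_of_finiteDimensional.tendsto v).comp (hlim 2) |>.eventually
    (Ioi_mem_nhds (hg v (subset_convexHull ℝ _ (Set.mem_insert _ _))))).exists
  refine hgx.not_ge (nonneg_of_mem_DF_upperSeq (u := codePrefix c k) g (fun i hi => ?_) ?_
    (le_of_lt hk) (DF_mono (hc k).2 hx))
  · rw [take_codePrefix c (hi.trans (length_codePrefix c k).le)]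
    exact hg_vertex i
  · rw [corner_codePrefix_one]
    exact hg_vertex (k + 1)

lemma mem_extremePoints_convexHull_insert_range_vertex
    (hv : ∀ k, v ∈ triangle (codePrefix c k)) (hirr : TotallyIrrational v) :
    v ∈ Set.extremePoints ℝ (convexHull ℝ (insert v (Set.range (vertex c)))) := by
  refine mem_extremePoints_convexHull_insert (notMem_convexHull_of_eventually_nonpos
    (f := fun k => sepFunctional (codePrefix c k)) ?_ (Eventually.frequently (f := atTop) ?_))
  · rintro _ ⟨i, rfl⟩
    filter_upwards [eventually_ge_atTop i] with k hik
    exact sepFunctional_codePrefix_vertex_nonpos c hik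
  · exact .of_forall fun k => sepFunctional_pos_of_totallyIrrational hirr (hv k)

lemma exists_ne_zero_forall_map_vertex_nonpos
    (hv : ∀ k, v ∈ triangle (codePrefix c k)) (hirr : TotallyIrrational v) :
    ∃ g : (Fin 3 → ℝ) →ₗ[ℝ] ℝ, g ≠ 0 ∧ g v = 0 ∧ ∀ i, g (vertex c i) ≤ 0 := by
  let f (k : ℕ) : (Fin 3 → ℝ) →ₗ[ℝ] ℝ :=
    sepFunctional (codePrefix c k) - sepFunctional (codePrefix c k) v • coordSum
  have hf_vertex {i k : ℕ} (hik : i ≤ k) : f k (vertex c i) < 0 := by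
    have hpos := sepFunctional_pos_of_totallyIrrational hirr (hv k)
    have hnonpos := sepFunctional_codePrefix_vertex_nonpos c hik
    simp only [f, LinearMap.sub_apply, LinearMap.smul_apply, coordSum_vertex, smul_eq_mul, mul_one]
    linarith
  have hf_limit (k : ℕ) : f k v = 0 := by
    simp only [f, LinearMap.sub_apply, LinearMap.smul_apply, (hv k).1, smul_eq_mul, mul_one,
      sub_self]
  obtain ⟨g, hg, hg_nonpos⟩ := exists_ne_zero_of_eventually_nonpos
    (f := fun k => LinearMap.toContinuousLinearMap (f k)) fun k hzero =>
      (hf_vertex k.zero_le).ne (congrArg (fun h => h (vertex c 0)) hzero)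
  refine ⟨g, ?_, le_antisymm (hg_nonpos v ?_) ?_, fun i => hg_nonpos _ ?_⟩
  · exact fun h => hg (ContinuousLinearMap.coe_injective h)
  · exact .of_forall fun k => (hf_limit k).le
  · refine neg_nonpos.1 (map_neg g v ▸ hg_nonpos (-v) (.of_forall fun k => ?_))
    exact ((f k).map_neg v).trans_le (by rw [hf_limit, neg_zero])
  · filter_upwards [eventually_ge_atTop i] with k hik
    exact (hf_vertex hik).le

end Limit

/-! ### Generic codes -/

/-- An infinite code whose nested triangles shrink to a totally irrational point, at which
consecutive vertices are seen in almost opposite directions. -/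
structure IsGenericCode (c : ℕ → ℕ) : Prop where
  exists_dist_le : ∀ ε > 0, ∃ k, ∀ x ∈ triangle (codePrefix c k),
    ∀ y ∈ triangle (codePrefix c k), dist x y ≤ ε
  exists_sum_ne_zero : ∀ m : Fin 3 → ℤ, m ≠ 0 → ∃ k, ∀ x ∈ triangle (codePrefix c k),
    ∑ i, (m i : ℝ) * x i ≠ 0
  exists_norm_normalize_add_le : ∀ ε > 0, ∃ i k, ∀ x ∈ triangle (codePrefix c k),
    ‖NormedSpace.normalize (vertex c i - x) + NormedSpace.normalize (vertex c (i + 1) - x)‖ ≤ ε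

namespace IsGenericCode

variable {c : ℕ → ℕ} {v : Fin 3 → ℝ}

lemma tendsto_corner_codePrefix (hc : IsGenericCode c) (hv : ∀ k, v ∈ triangle (codePrefix c k))
    (a : Fin 3) : Tendsto (fun k => corner (codePrefix c k) a) atTop (𝓝 v) := by
  refine Metric.tendsto_nhds.2 fun ε hε => ?_
  obtain ⟨k, hk⟩ := hc.exists_dist_le (ε / 2) (half_pos hε)
  filter_upwards [eventually_ge_atTop k] with n hn
  exact (hk _ (antitone_triangle_codePrefix c hn (corner_mem_triangle _ a)) v (hv k)).trans_lt
    (half_lt_self hε)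

lemma totallyIrrational (hc : IsGenericCode c) (hv : ∀ k, v ∈ triangle (codePrefix c k)) :
    TotallyIrrational v := fun ⟨m, hm, hzero⟩ => by
  obtain ⟨k, hk⟩ := hc.exists_sum_ne_zero m hm
  exact hk v (hv k) hzero

lemma exists_isFlatDirection (hc : IsGenericCode c) (hv : ∀ k, v ∈ triangle (codePrefix c k))
    {S : Set (Fin 3 → ℝ)} (hS : Set.range (vertex c) ⊆ S) : ∃ d, IsFlatDirection S v d := by
  have hne (i : ℕ) : vertex c i ≠ v := fun h =>
    (sepFunctional_codePrefix_vertex_nonpos c le_rfl).not_gt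
      (h ▸ sepFunctional_pos_of_totallyIrrational (hc.totallyIrrational hv) (hv i))
  refine _root_.exists_isFlatDirection fun ε hε => ?_
  obtain ⟨i, k, hik⟩ := hc.exists_norm_normalize_add_le ε hε
  exact ⟨_, ⟨vertex c i, ⟨hS ⟨i, rfl⟩, hne i⟩, rfl⟩, _,
    ⟨vertex c (i + 1), ⟨hS ⟨i + 1, rfl⟩, hne (i + 1)⟩, rfl⟩, hik v (hv k)⟩

end IsGenericCode

/-- The countably many properties of a finite code that, imposed on the prefixes of an infinite
code, make it exist and be generic. -/
def genericProperty : ℕ ⊕ ℕ ⊕ ℕ ⊕ {m : Fin 3 → ℤ // m ≠ 0} → List ℕ → Prop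
  | .inl k => fun u => k ≤ u.length
  | .inr (.inl k) => fun u => ∀ x ∈ triangle u, ∀ y ∈ triangle u, dist x y ≤ 1 / ((k : ℝ) + 1)
  | .inr (.inr (.inl k)) => fun u => ∃ u₁, u₁ <+: u ∧ ∀ x ∈ triangle u,
      ‖NormedSpace.normalize (corner u₁ 0 - x) + NormedSpace.normalize (corner u₁ 1 - x)‖ ≤
        1 / ((k : ℝ) + 1)
  | .inr (.inr (.inr m)) => fun u => ∀ x ∈ triangle u, ∑ i, (m.1 i : ℝ) * x i ≠ 0

lemma extendable_sum_mul_ne_zero {m : Fin 3 → ℤ} (hm : m ≠ 0) :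
    Extendable fun u => ∀ x ∈ triangle u, ∑ i, (m i : ℝ) * x i ≠ 0 := by
  let g : (Fin 3 → ℝ) →ₗ[ℝ] ℝ := ∑ i, (m i : ℝ) • LinearMap.proj i
  have hg_apply (x : Fin 3 → ℝ) : g x = ∑ i, (m i : ℝ) * x i := by simp [g]
  obtain ⟨a, ha⟩ := Function.ne_iff.1 hm
  have hg : g ≠ 0 := fun h => ha <| by
    simpa [hg_apply, stdVec, Pi.single_apply] using LinearMap.congr_fun h (stdVec a)
  simpa only [hg_apply] using extendable_map_ne_zero hg

lemma extendable_genericProperty : ∀ i, Extendable (genericProperty i)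
  | .inl k => extendable_le_length k
  | .inr (.inl _) => extendable_dist_triangle_le (by positivity)
  | .inr (.inr (.inl _)) => extendable_norm_normalize_add_le (by positivity)
  | .inr (.inr (.inr m)) => extendable_sum_mul_ne_zero m.2

lemma exists_isCode_and_isGenericCode {w : Seq3}
    (h : ∀ i, ∃ u, genericProperty i u ∧ w ∈ codeInterval u) :
    ∃ c, IsCode w c ∧ IsGenericCode c := by
  obtain ⟨c, hc⟩ := exists_isCode fun k => h (.inl k)
  have hprefix (i) : ∃ k, genericProperty i (codePrefix c k) := by
    obtain ⟨u, hu, hwu⟩ := h i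
    exact ⟨u.length, hc.eq_codePrefix hwu ▸ hu⟩
  refine ⟨c, hc, fun ε hε => ?_, fun m hm => hprefix (.inr (.inr (.inr ⟨m, hm⟩))), fun ε hε => ?_⟩
  · obtain ⟨n, hn⟩ := exists_nat_one_div_lt hε
    obtain ⟨k, hk⟩ := hprefix (.inr (.inl n))
    exact ⟨k, fun x hx y hy => (hk x hx y hy).trans hn.le⟩
  · obtain ⟨n, hn⟩ := exists_nat_one_div_lt hε
    obtain ⟨k, u, hu, hk⟩ := hprefix (.inr (.inr (.inl n)))
    refine ⟨u.length, k, fun x hx => ?_⟩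
    rw [vertex, ← corner_codePrefix_one, ← take_codePrefix c (hu.length_le.trans
      (length_codePrefix c k).le), ← List.prefix_iff_eq_take.1 hu]
    exact (hk x hx).trans hn.le

theorem IsCode.exists_smooth_accPt_extremePoints {w : Seq3} {c : ℕ → ℕ} (hc : IsCode w c)
    (hw : w 0 = 2) (hgen : IsGenericCode c) :
    ∃ v, AccPt v (𝓟 (Set.extremePoints ℝ (DF w))) ∧
      (∀ v', AccPt v' (𝓟 (Set.extremePoints ℝ (DF w))) → v' = v) ∧
      v ∈ Set.extremePoints ℝ (DF w) ∧ TotallyIrrational v ∧ ∃! L, IsSuppLine (DF w) v L := by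
  obtain ⟨v, hv⟩ := exists_forall_mem_triangle_codePrefix c
  have hirr := hgen.totallyIrrational hv
  have hlim := hgen.tendsto_corner_codePrefix hv
  have hhull := hc.DF_eq_convexHull hw hlim
  have hextreme : v ∈ Set.extremePoints ℝ (DF w) :=
    hhull ▸ mem_extremePoints_convexHull_insert_range_vertex hv hirr
  obtain ⟨d, hd⟩ := hgen.exists_isFlatDirection hv (Set.range_subset_iff.2 hc.vertex_mem_DF)
  obtain ⟨g, hg, hgv, hg_vertex⟩ := exists_ne_zero_forall_map_vertex_nonpos hv hirr
  have hg_DF : ∀ x ∈ DF w, g x ≤ 0 := by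
    rw [hhull]
    exact convexHull_min (Set.insert_subset hgv.le (Set.range_subset_iff.2 hg_vertex))
      (convex_halfSpace_le g.isLinear 0)
  exact ⟨v, hd.accPt_extremePoints (isCompact_DF hw) (convex_DF hw) hextreme,
    fun x hx => eq_of_accPt_of_tendsto (hlim 0)
      (hhull ▸ extremePoints_convexHull_subset) hx, hextreme, hirr,
    hd.existsUnique_isSuppLine (fun x hx => coordSum_eq_one_of_mem_DF hw hx)
      (coordSum_eq_one_of_mem_DF hw hextreme.1) hg hgv hg_DF⟩

/-- In `𝒟 = {DF(w) : w ∈ Max}` with the Hausdorff metric, there is a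
dense `G_δ` set of digit frequency sets `Λ` whose extreme points have a unique
accumulation point `v`, which is an extreme point of `Λ`, is totally irrational, and at
which `Λ` is smooth (unique supporting line in the plane containing `Δ`). -/
theorem stmt12 :
    ∃ F : {w : Seq3 // w ∈ MaxSet} → TopologicalSpace.NonemptyCompacts (Fin 3 → ℝ),
      (∀ w, (F w : Set (Fin 3 → ℝ)) = DF w.1) ∧
      ∃ G : Set ↥(Set.range F), Dense G ∧ IsGδ G ∧
        ∀ Λ ∈ G, ∀ S : Set (Fin 3 → ℝ),
          S = ((Λ : ↥(Set.range F)) : TopologicalSpace.NonemptyCompacts (Fin 3 → ℝ)) →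
          ∃ v : Fin 3 → ℝ,
            AccPt v (Filter.principal (Set.extremePoints ℝ S)) ∧
            (∀ v', AccPt v' (Filter.principal (Set.extremePoints ℝ S)) → v' = v) ∧
            v ∈ Set.extremePoints ℝ S ∧
            TotallyIrrational v ∧
            ∃! L : Set (Fin 3 → ℝ), IsSuppLine S v L := by
  refine ⟨compactDF, fun _ => rfl, ⋂ i, codedSets (genericProperty i),
    dense_iInter_codedSets extendable_genericProperty, isGδ_iInter_codedSets _, ?_⟩
  rintro ⟨_, w, rfl⟩ hΛ S rfl
  obtain ⟨c, hc, hgen⟩ := exists_isCode_and_isGenericCode fun i =>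
    exists_mem_codeInterval_of_mem_codedSets (Set.mem_iInter.1 hΛ i)
  exact hc.exists_smooth_accPt_extremePoints w.2.1 hgen
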